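/- arXiv:1511.02558 — 3 statements merged into one kernel-verified Lean document; each statement's English description precedes it below -/
import Mathlib

section
/- The limit as n → ∞ of (n-1)^{5/2} · ( (log T̃(n+1))/(n+1) + (log T̃(n-1))/(n-1) - 2·(log T̃(n))/n ) equals 3π/√24. -/
open Real Filter Topology

/-- The partition function, as a real number. -/
noncomputable def p (n : ℕ) : ℝ := (Fintype.card (Nat.Partition n) : ℝ)

/-- `μ(x) = (π/6)·√(24x - 1)`. -/
noncomputable def mu (x : ℝ) : ℝ := π / 6 * Real.sqrt (24 * x - 1)

/-- `d = π²/(6√3)`. -/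
noncomputable def d : ℝ := π ^ 2 / (6 * Real.sqrt 3)

/-- The main term `T̃(x) = (d/μ(x)²)·(1 - 1/μ(x))·e^{μ(x)}`. -/
noncomputable def T (x : ℝ) : ℝ := d / mu x ^ 2 * (1 - 1 / mu x) * Real.exp (mu x)

/-- A second difference is a value of the second derivative at an intermediate point. -/
lemma exists_second_difference_eq {f f' f'' : ℝ → ℝ} {x : ℝ}
    (hf : ∀ y ∈ Set.Icc (x - 1) (x + 1), HasDerivAt f (f' y) y)
    (hf' : ∀ y ∈ Set.Icc (x - 1) (x + 1), HasDerivAt f' (f'' y) y) :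
    ∃ ξ ∈ Set.Ioo (x - 1) (x + 1), f (x + 1) + f (x - 1) - 2 * f x = f'' ξ := by
  have hdiff : ∀ y ∈ Set.Icc (x - 1) x,
      HasDerivAt (fun t => f (t + 1) - f t) (f' (y + 1) - f' y) y := fun y hy =>
    ((hf (y + 1) ⟨by linarith [hy.1], by linarith [hy.2]⟩).comp_add_const y 1).sub
      (hf y ⟨hy.1, by linarith [hy.2]⟩)
  obtain ⟨η, hη, hη'⟩ := exists_hasDerivAt_eq_slope (fun t => f (t + 1) - f t)
    (fun y => f' (y + 1) - f' y) (show x - 1 < x by linarith)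
    (fun y hy => (hdiff y hy).continuousAt.continuousWithinAt)
    (fun y hy => hdiff y (Set.Ioo_subset_Icc_self hy))
  have hmem : ∀ y ∈ Set.Icc η (η + 1), y ∈ Set.Icc (x - 1) (x + 1) := fun y hy =>
    ⟨by linarith [hy.1, hη.1], by linarith [hy.2, hη.2]⟩
  obtain ⟨ξ, hξ, hξ'⟩ := exists_hasDerivAt_eq_slope f' f'' (show η < η + 1 by linarith)
    (fun y hy => (hf' y (hmem y hy)).continuousAt.continuousWithinAt)
    (fun y hy => hf' y (hmem y (Set.Ioo_subset_Icc_self hy)))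
  refine ⟨ξ, ⟨by linarith [hξ.1, hη.1], by linarith [hξ.2, hη.2]⟩, ?_⟩
  simp only [sub_sub_cancel, add_sub_cancel_left, div_one, sub_add_cancel] at hη' hξ'
  linarith

/-- If `x ^ a * f'' x` has a limit at infinity, then the second differences of `f`,
scaled by `(n - 1) ^ a`, have the same limit. -/
lemma tendsto_rpow_mul_second_difference {f f' f'' : ℝ → ℝ} {a b L : ℝ}
    (hf : ∀ y, b < y → HasDerivAt f (f' y) y)
    (hf' : ∀ y, b < y → HasDerivAt f' (f'' y) y)
    (hL : Tendsto (fun x => x ^ a * f'' x) atTop (𝓝 L)) :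
    Tendsto (fun n : ℕ => ((n : ℝ) - 1) ^ a *
      (f ((n : ℝ) + 1) + f ((n : ℝ) - 1) - 2 * f n)) atTop (𝓝 L) := by
  have hex : ∀ n : ℕ, ∃ ξ ∈ Set.Ioo ((n : ℝ) - 1) (n + 1), b < (n : ℝ) - 1 →
      f ((n : ℝ) + 1) + f ((n : ℝ) - 1) - 2 * f n = f'' ξ := by
    intro n
    by_cases hn : b < (n : ℝ) - 1
    · obtain ⟨ξ, hξ, h⟩ := exists_second_difference_eq (f := f) (f' := f') (f'' := f'') (x := n)
        (fun y hy => hf y (hn.trans_le hy.1)) (fun y hy => hf' y (hn.trans_le hy.1))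
      exact ⟨ξ, hξ, fun _ => h⟩
    · exact ⟨n, ⟨by linarith, by linarith⟩, fun h => absurd h hn⟩
  choose ξ hξ hξ' using hex
  have hpred : Tendsto (fun n : ℕ => (n : ℝ) - 1) atTop atTop :=
    tendsto_atTop_add_const_right _ _ tendsto_natCast_atTop_atTop
  have hξtop : Tendsto ξ atTop atTop := tendsto_atTop_mono (fun n => (hξ n).1.le) hpred
  have hlower : Tendsto (fun n : ℕ => 1 - 2 / ((n : ℝ) + 1)) atTop (𝓝 1) := by
    simpa using tendsto_const_nhds.sub (tendsto_const_nhds.div_atTop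
      (tendsto_atTop_add_const_right _ (1 : ℝ) tendsto_natCast_atTop_atTop))
  have hratio : Tendsto (fun n : ℕ => ((n : ℝ) - 1) / ξ n) atTop (𝓝 1) := by
    refine tendsto_of_tendsto_of_tendsto_of_le_of_le' hlower tendsto_const_nhds ?_ ?_
    · filter_upwards [hpred.eventually_gt_atTop 0] with n hn
      have hξ0 : 0 < ξ n := hn.trans (hξ n).1
      have heq : 1 - 2 / ((n : ℝ) + 1) = ((n : ℝ) - 1) / (n + 1) := by
        field_simp
        ring
      rw [heq]
      exact div_le_div_of_nonneg_left hn.le hξ0 (hξ n).2.le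
    · filter_upwards [hpred.eventually_gt_atTop 0] with n hn
      exact (div_le_one (hn.trans (hξ n).1)).2 (hξ n).1.le
  have hprod := (hratio.rpow_const (p := a) (Or.inl one_ne_zero)).mul (hL.comp hξtop)
  rw [one_rpow, one_mul] at hprod
  refine hprod.congr' ?_
  filter_upwards [hpred.eventually_gt_atTop 0, hpred.eventually_gt_atTop b] with n hn hnb
  have hξ0 : 0 < ξ n := hn.trans (hξ n).1
  have hpow : ξ n ^ a ≠ 0 := (rpow_pos_of_pos hξ0 a).ne'
  rw [hξ' n hnb, div_rpow hn.le hξ0.le, Function.comp_apply]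
  field_simp

lemma one_lt_mu {x : ℝ} (hx : 1 < x) : 1 < mu x := by
  have hsqrt : 2 < √(24 * x - 1) := lt_sqrt_of_sq_lt (by linarith)
  unfold mu
  nlinarith [pi_gt_three]

lemma hasDerivAt_mu {x : ℝ} (hx : 1 < x) : HasDerivAt mu (π ^ 2 / 3 / mu x) x := by
  have hlin : HasDerivAt (fun y : ℝ => 24 * y - 1) 24 x := by
    simpa using ((hasDerivAt_id x).const_mul 24).sub_const 1
  have hpos : 0 < √(24 * x - 1) := sqrt_pos.2 (by linarith)
  refine ((hlin.sqrt (by linarith)).const_mul (π / 6)).congr_deriv ?_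
  unfold mu
  field_simp
  norm_num

lemma log_T {x : ℝ} (hx : 1 < x) :
    log (T x) = log d - 2 * log (mu x) + log (1 - 1 / mu x) + mu x := by
  have hmu := one_lt_mu hx
  have hd : d ≠ 0 := by unfold d; positivity
  have hsub : 1 - 1 / mu x ≠ 0 := by
    have : 1 / mu x < 1 := (div_lt_one (by linarith)).2 hmu
    linarith
  have hmu0 : mu x ≠ 0 := by linarith
  unfold T
  rw [log_mul (by positivity) (by positivity), log_mul (by positivity) hsub,
    log_div hd (by positivity), log_exp, log_pow]
  norm_num

lemma hasDerivAt_log_T {x : ℝ} (hx : 1 < x) :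
    HasDerivAt (fun y => log (T y))
      (π ^ 2 / 3 * (1 / mu x - 3 / mu x ^ 2 + 1 / (mu x * (mu x - 1)))) x := by
  have hmu := one_lt_mu hx
  have hmu0 : mu x ≠ 0 := by linarith
  have hmu1 : mu x - 1 ≠ 0 := by linarith
  have hsub : 1 - 1 / mu x ≠ 0 := by
    have : 1 / mu x < 1 := (div_lt_one (by linarith)).2 hmu
    linarith
  have hm := hasDerivAt_mu hx
  have hinv : HasDerivAt (fun y => 1 - 1 / mu y) (π ^ 2 / 3 / mu x / mu x ^ 2) x := by
    simp only [one_div]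
    exact ((hm.fun_inv hmu0).const_sub 1).congr_deriv (by ring)
  have hsum := ((((hm.log hmu0).const_mul 2).const_sub (log d)).add (hinv.log hsub)).add hm
  refine (hsum.congr_deriv ?_).congr_of_eventuallyEq ?_
  · field_simp
    ring
  · filter_upwards [eventually_gt_nhds hx] with y hy
    exact log_T hy

lemma hasDerivAt_deriv_log_T {x : ℝ} (hx : 1 < x) :
    HasDerivAt (fun y => π ^ 2 / 3 * (1 / mu y - 3 / mu y ^ 2 + 1 / (mu y * (mu y - 1))))
      ((π ^ 2 / 3) ^ 2 / mu x ^ 3 *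
        (-1 + 6 / mu x - (2 * mu x - 1) / (mu x - 1) ^ 2)) x := by
  have hmu := one_lt_mu hx
  have hmu0 : mu x ≠ 0 := by linarith
  have hmu1 : mu x - 1 ≠ 0 := by linarith
  have hm := hasDerivAt_mu hx
  have hone := hasDerivAt_const x (1 : ℝ)
  have hsum := (((hone.div hm hmu0).sub ((hasDerivAt_const x (3 : ℝ)).div (hm.pow 2)
    (pow_ne_zero 2 hmu0))).add (hone.div (hm.mul (hm.sub_const 1))
      (mul_ne_zero hmu0 hmu1))).const_mul (π ^ 2 / 3)
  refine hsum.congr_deriv ?_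
  simp only [Pi.mul_apply, Pi.pow_apply]
  field_simp
  ring

lemma tendsto_mu_atTop : Tendsto mu atTop atTop := by
  have hlin : Tendsto (fun x : ℝ => 24 * x - 1) atTop atTop :=
    tendsto_atTop_add_const_right _ _ (tendsto_id.const_mul_atTop (by norm_num))
  exact (tendsto_sqrt_atTop.comp hlin).const_mul_atTop (by positivity)

lemma tendsto_mu_div_sqrt : Tendsto (fun x => mu x / √x) atTop (𝓝 (π / 6 * √24)) := by
  have hlim : Tendsto (fun x : ℝ => 24 - x⁻¹) atTop (𝓝 24) := by
    simpa using tendsto_const_nhds.sub (tendsto_inv_atTop_zero (𝕜 := ℝ))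
  refine (hlim.sqrt.const_mul (π / 6)).congr' ?_
  filter_upwards [eventually_gt_atTop 1] with x hx
  unfold mu
  rw [mul_div_assoc, ← sqrt_div (by linarith)]
  congr 2
  field_simp

/-- The second derivative of `log (T x) / x`, scaled by `x ^ (5 / 2)`, tends to `3π/√24`. -/
lemma tendsto_rpow_mul_second_deriv :
    Tendsto (fun x : ℝ => x ^ ((5 : ℝ) / 2) *
      ((π ^ 2 / 3) ^ 2 / mu x ^ 3 * (-1 + 6 / mu x - (2 * mu x - 1) / (mu x - 1) ^ 2) / x
        - 2 * (π ^ 2 / 3 * (1 / mu x - 3 / mu x ^ 2 + 1 / (mu x * (mu x - 1)))) / x ^ 2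
        + 2 * log (T x) / x ^ 3)) atTop (𝓝 (3 * π / √24)) := by
  have hq := tendsto_mu_div_sqrt
  set c := π / 6 * √24 with hc
  have hc0 : c ≠ 0 := by positivity
  have hv : Tendsto (fun x => (mu x)⁻¹) atTop (𝓝 0) := tendsto_inv_atTop_zero.comp tendsto_mu_atTop
  have hw : Tendsto (fun x => log (mu x) / mu x) atTop (𝓝 0) :=
    (isLittleO_log_id_atTop.tendsto_div_nhds_zero).comp tendsto_mu_atTop
  have hv1 : Tendsto (fun x => 1 - (mu x)⁻¹) atTop (𝓝 1) := by simpa using hv.const_sub 1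
  have hsecond : Tendsto (fun x => (π ^ 2 / 3) ^ 2 * (mu x / √x)⁻¹ ^ 3 *
      (-1 + 6 * (mu x)⁻¹ - (mu x)⁻¹ * (2 - (mu x)⁻¹) / (1 - (mu x)⁻¹) ^ 2)) atTop
      (𝓝 ((π ^ 2 / 3) ^ 2 * c⁻¹ ^ 3 * (-1 + 6 * 0 - 0 * (2 - 0) / 1 ^ 2))) :=
    (((hq.inv₀ hc0).pow 3).const_mul _).mul (((hv.const_mul 6).const_add (-1)).sub
      ((hv.mul (hv.const_sub 2)).div (hv1.pow 2) (by norm_num)))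
  have hfirst : Tendsto (fun x => 2 * (π ^ 2 / 3) * (mu x / √x)⁻¹ *
      (1 - 3 * (mu x)⁻¹ + (mu x)⁻¹ / (1 - (mu x)⁻¹))) atTop
      (𝓝 (2 * (π ^ 2 / 3) * c⁻¹ * (1 - 3 * 0 + 0 / 1))) :=
    ((hq.inv₀ hc0).const_mul _).mul (((hv.const_mul 3).const_sub 1).add
      (hv.div hv1 one_ne_zero))
  have hzeroth : Tendsto (fun x => 2 * (mu x / √x) * (log d * (mu x)⁻¹
      - 2 * (log (mu x) / mu x) + log (1 - (mu x)⁻¹) * (mu x)⁻¹ + 1)) atTop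
      (𝓝 (2 * c * (log d * 0 - 2 * 0 + log 1 * 0 + 1))) :=
    (hq.const_mul 2).mul ((((hv.const_mul _).sub (hw.const_mul 2)).add
      ((hv1.log one_ne_zero).mul hv)).add_const 1)
  have htotal := (hsecond.sub hfirst).add hzeroth
  have hlimit : (π ^ 2 / 3) ^ 2 * c⁻¹ ^ 3 * (-1 + 6 * 0 - 0 * (2 - 0) / 1 ^ 2) -
      2 * (π ^ 2 / 3) * c⁻¹ * (1 - 3 * 0 + 0 / 1) +
      2 * c * (log d * 0 - 2 * 0 + log 1 * 0 + 1) = 3 * π / √24 := by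
    have hsq : √24 ^ 2 = (24 : ℝ) := sq_sqrt (by norm_num)
    have hsq4 : √24 ^ 4 = (576 : ℝ) := by
      rw [show √24 ^ 4 = (√24 ^ 2) ^ 2 by ring, hsq]; norm_num
    rw [hc]
    simp only [log_one]
    field_simp
    ring_nf
    simp only [hsq, hsq4]
    ring
  rw [hlimit] at htotal
  refine htotal.congr' ?_
  filter_upwards [eventually_gt_atTop 1] with x hx
  have hmu := one_lt_mu hx
  have hmu0 : mu x ≠ 0 := by linarith
  have hmu1 : mu x - 1 ≠ 0 := by linarith
  have hx0 : 0 < x := by linarith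
  have hs0 : 0 < √x := sqrt_pos.2 hx0
  have hpow : x ^ ((5 : ℝ) / 2) = √x ^ 5 := by
    rw [sqrt_eq_rpow, ← rpow_natCast, ← rpow_mul hx0.le]
    norm_num
  have hxs : x = √x ^ 2 := (sq_sqrt hx0.le).symm
  rw [hpow, log_T hx, one_div (mu x)]
  generalize log (1 - (mu x)⁻¹) = l
  generalize mu x = m at *
  generalize √x = s at *
  subst hxs
  have hm1 : 1 - m⁻¹ = (m - 1) / m := by field_simp
  rw [hm1]
  field_simp

theorem limit_second_difference_log_T :
    Tendsto (fun n : ℕ =>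
        ((n : ℝ) - 1) ^ ((5 : ℝ) / 2) *
          (Real.log (T ((n : ℝ) + 1)) / ((n : ℝ) + 1) +
            Real.log (T ((n : ℝ) - 1)) / ((n : ℝ) - 1) -
            2 * Real.log (T (n : ℝ)) / (n : ℝ)))
      atTop (nhds (3 * π / Real.sqrt 24)) := by
  have hf : ∀ x : ℝ, 1 < x → HasDerivAt (fun y => log (T y) / y)
      (π ^ 2 / 3 * (1 / mu x - 3 / mu x ^ 2 + 1 / (mu x * (mu x - 1))) / x
        - log (T x) / x ^ 2) x := by
    intro x hx
    have hx0 : x ≠ 0 := by linarith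
    refine ((hasDerivAt_log_T hx).div (hasDerivAt_id x) hx0).congr_deriv ?_
    simp only [id]
    generalize π ^ 2 / 3 * (1 / mu x - 3 / mu x ^ 2 + 1 / (mu x * (mu x - 1))) = g
    field_simp
  refine (tendsto_rpow_mul_second_difference hf (fun x hx => ?_)
    tendsto_rpow_mul_second_deriv).congr (fun n => by rw [mul_div_assoc])
  have hx0 : x ≠ 0 := by linarith
  refine (((hasDerivAt_deriv_log_T hx).div (hasDerivAt_id x) hx0).sub
    ((hasDerivAt_log_T hx).div ((hasDerivAt_id x).pow 2) (pow_ne_zero 2 hx0))).congr_deriv ?_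
  simp only [id, Pi.pow_apply]
  generalize π ^ 2 / 3 * (1 / mu x - 3 / mu x ^ 2 + 1 / (mu x * (mu x - 1))) = g
  generalize (π ^ 2 / 3) ^ 2 / mu x ^ 3 *
    (-1 + 6 / mu x - (2 * mu x - 1) / (mu x - 1) ^ 2) = g'
  field_simp
  ring
end

section
/- The limit as n → ∞ of (n-1)^{5/2} · (Ẽ(n+1) + Ẽ(n-1) - 2·Ẽ(n)) equals 0, where Ẽ(m) = (1/m)·log(p(m)/T̃(m)). -/
open Real Filter Topology

/-- The error term `Ẽ(n) = (1/n)·log(p(n)/T̃(n))`. -/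
noncomputable def E (n : ℕ) : ℝ := 1 / (n : ℝ) * Real.log (p n / T (n : ℝ))

open PowerSeries PowerSeries.WithPiTopology in
theorem coeff_tsum_X_pow_mul {k : ℕ} (hk : 0 < k) (n : ℕ) :
    PowerSeries.coeff n (∑' j : ℕ, (X : PowerSeries ℂ) ^ (k * j)) = if k ∣ n then 1 else 0 := by
  have h := PowerSeries.WithPiTopology.summable_pow_of_constantCoeff_eq_zero
    (f := (X : PowerSeries ℂ) ^ k) (by simp [hk.ne'])
  simp_rw [← pow_mul] at h
  rw [h.map_tsum _ (WithPiTopology.continuous_coeff ℂ n)]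
  simp_rw [coeff_X_pow]
  split_ifs with hd
  · obtain ⟨j, rfl⟩ := hd
    rw [tsum_eq_single j (fun i hi => if_neg fun h => hi (Nat.eq_of_mul_eq_mul_left hk h).symm)]
    simp
  · convert! tsum_zero with j
    exact if_neg fun h => hd ⟨j, h⟩

/-- The finite product of geometric series `∏_{i ∈ s} ∑_j X^{(i+1)j}`. -/
noncomputable def geomProd (s : Finset ℕ) : PowerSeries ℂ :=
  open scoped PowerSeries.WithPiTopology in
  ∏ i ∈ s, ∑' j : ℕ, PowerSeries.X ^ ((i + 1) * j)

theorem hasSum_indicator_dvd {k : ℕ} (hk : 0 < k) {q : ℂ} (hq : ‖q‖ < 1) :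
    HasSum (fun n : ℕ => (if k ∣ n then (1 : ℂ) else 0) * q ^ n) (1 - q ^ k)⁻¹ := by
  have hinj : Function.Injective fun j : ℕ => k * j := fun a b h =>
    Nat.eq_of_mul_eq_mul_left hk h
  rw [← hinj.hasSum_iff]
  · have : ‖q ^ k‖ < 1 := by
      rw [norm_pow]; exact pow_lt_one₀ (norm_nonneg _) hq hk.ne'
    refine (hasSum_geometric_of_norm_lt_one this).congr_fun ?_
    intro j
    simp [pow_mul]
  · intro n hn
    rw [if_neg, zero_mul]
    rintro ⟨j, rfl⟩
    exact hn ⟨j, rfl⟩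

theorem hasSum_coeff_geomProd (s : Finset ℕ) {q : ℂ} (hq : ‖q‖ < 1) :
    (Summable fun n => ‖PowerSeries.coeff n (geomProd s) * q ^ n‖) ∧
    HasSum (fun n => PowerSeries.coeff n (geomProd s) * q ^ n) (∏ i ∈ s, (1 - q ^ (i + 1)))⁻¹ := by
  induction s using Finset.induction_on with
  | empty =>
    have h0 : ∀ n : ℕ, n ∉ ({0} : Finset ℕ) → PowerSeries.coeff n (geomProd ∅) * q ^ n = 0 := by
      intro n hn
      have : n ≠ 0 := by simpa using hn
      simp [geomProd, PowerSeries.coeff_one, this]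
    constructor
    · exact (hasSum_sum_of_ne_finset_zero (s := {0})
        (fun n hn => by rw [h0 n hn, norm_zero])).summable
    · simpa [geomProd] using hasSum_single 0 fun n hn => h0 n (by simpa using hn)
  | insert a s ha ih =>
    obtain ⟨ih1, ih2⟩ := ih
    have hk : 0 < a + 1 := by positivity
    have g1 := hasSum_indicator_dvd hk hq
    have g2 : Summable fun n : ℕ => ‖(if (a + 1) ∣ n then (1 : ℂ) else 0) * q ^ n‖ := by
      refine (summable_geometric_of_lt_one (norm_nonneg q) hq).of_nonneg_of_le
        (fun _ => norm_nonneg _) fun n => ?_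
      rw [norm_mul, norm_pow]
      split_ifs <;> simp
    have key : ∀ n, PowerSeries.coeff n (geomProd (insert a s)) * q ^ n =
        ∑ kl ∈ Finset.HasAntidiagonal.antidiagonal n, ((if (a + 1) ∣ kl.1 then (1 : ℂ) else 0) * q ^ kl.1) *
          (PowerSeries.coeff kl.2 (geomProd s) * q ^ kl.2) := by
      intro n
      rw [geomProd, Finset.prod_insert ha, PowerSeries.coeff_mul, Finset.sum_mul]
      refine Finset.sum_congr rfl fun kl hkl => ?_
      rw [coeff_tsum_X_pow_mul hk, ← Finset.HasAntidiagonal.mem_antidiagonal.1 hkl, pow_add, geomProd]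
      ring
    have hs := summable_norm_sum_mul_antidiagonal_of_summable_norm g2 ih1
    have ht := tsum_mul_tsum_eq_tsum_sum_antidiagonal_of_summable_norm g2 ih1
    simp_rw [← key] at hs ht
    refine ⟨hs, ?_⟩
    rw [Finset.prod_insert ha, mul_inv, ← g1.tsum_eq, ← ih2.tsum_eq, ht]
    exact hs.of_norm.hasSum

open scoped PowerSeries.WithPiTopology in
theorem tendsto_coeff_geomProd (n : ℕ) :
    Tendsto (fun N => PowerSeries.coeff n (geomProd (Finset.range N))) atTop (𝓝 (p n : ℂ)) := by
  have h := (Nat.Partition.hasProd_powerSeriesMk_card_restricted ℂ (fun _ => True)).tendsto_prod_nat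
  have h2 := ((PowerSeries.WithPiTopology.continuous_coeff ℂ n).tendsto _).comp h
  have h3 : Nat.Partition.restricted n (fun _ => True) = Finset.univ := by
    ext x; simp [Nat.Partition.restricted]
  simpa [h3, p, geomProd, Function.comp_def, Finset.card_univ] using h2

theorem integral_exp_int_mul_I (k : ℤ) :
    ∫ θ in (-π)..π, Complex.exp (k * θ * Complex.I) = if k = 0 then (2 * π : ℂ) else 0 := by
  split_ifs with hk
  · simp [hk]; ring
  · have hc : (k : ℂ) * Complex.I ≠ 0 := by simp [hk]
    have : ∀ θ : ℝ, Complex.exp (k * θ * Complex.I) = Complex.exp ((k * Complex.I) * θ) :=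
      fun θ => by ring_nf
    simp_rw [this]
    rw [integral_exp_mul_complex hc, div_eq_zero_iff]
    left
    rw [sub_eq_zero, Complex.exp_eq_exp_iff_exists_int]
    exact ⟨k, by push_cast; ring⟩

/-- The point `e^{-(t + iθ)}` of the circle of radius `e^{-t}`. -/
noncomputable def circlePt (t θ : ℝ) : ℂ := Complex.exp (-(t + θ * Complex.I))

theorem norm_circlePt (t θ : ℝ) : ‖circlePt t θ‖ = Real.exp (-t) := by
  simp [circlePt, Complex.norm_exp]

theorem norm_circlePt_lt_one {t : ℝ} (ht : 0 < t) (θ : ℝ) : ‖circlePt t θ‖ < 1 := by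
  rw [norm_circlePt]; simpa using ht

theorem continuous_circlePt (t : ℝ) : Continuous (circlePt t) := by
  unfold circlePt; fun_prop

theorem integral_powerSeries_mul_exp {a : ℕ → ℂ} {t : ℝ} {f : ℂ → ℂ}
    (ha : Summable fun n => ‖a n‖ * Real.exp (-t) ^ n)
    (hf : ∀ θ : ℝ, HasSum (fun n => a n * circlePt t θ ^ n) (f (circlePt t θ))) (m : ℕ) :
    ∫ θ in (-π)..π, f (circlePt t θ) * Complex.exp (m * (t + θ * Complex.I)) = 2 * π * a m := by
  have h1 : HasSum (fun n => ∫ θ in (-π)..π, a n * circlePt t θ ^ n *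
      Complex.exp (m * (t + θ * Complex.I)))
      (∫ θ in (-π)..π, f (circlePt t θ) * Complex.exp (m * (t + θ * Complex.I))) := by
    refine intervalIntegral.hasSum_integral_of_dominated_convergence
      (fun n _ => ‖a n‖ * Real.exp (-t) ^ n * Real.exp (m * t)) (fun n => ?_) (fun n => ?_)
      (.of_forall fun _ _ => ha.mul_right _) (by simp) (.of_forall fun θ _ => (hf θ).mul_right _)
    · have := continuous_circlePt t
      exact Continuous.aestronglyMeasurable (by fun_prop)
    · refine .of_forall fun θ _ => ?_
      rw [norm_mul, norm_mul, norm_pow, norm_circlePt, Complex.norm_exp]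
      simp
  have h2 : ∀ n : ℕ, ∫ θ in (-π)..π, a n * circlePt t θ ^ n *
      Complex.exp (m * (t + θ * Complex.I)) = if n = m then 2 * π * a m else 0 := by
    intro n
    have : ∀ θ : ℝ, a n * circlePt t θ ^ n * Complex.exp (m * (t + θ * Complex.I)) =
        (a n * Complex.exp ((m - n) * t)) * Complex.exp (((m - n : ℤ) : ℂ) * θ * Complex.I) := by
      intro θ
      rw [circlePt, ← Complex.exp_nat_mul, mul_assoc, mul_assoc, ← Complex.exp_add,
        ← Complex.exp_add]
      push_cast
      ring_nf
    simp_rw [this]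
    rw [intervalIntegral.integral_const_mul, integral_exp_int_mul_I]
    by_cases h : n = m
    · subst h; simp; ring
    · rw [if_neg (by omega), if_neg h, mul_zero]
  simp_rw [h2] at h1
  exact h1.unique (by simpa using hasSum_ite_eq m (2 * π * a m))

/-- Euler's product `∏ (1 - q^n)`. -/
noncomputable def eulerProd (q : ℂ) : ℂ := ∏' n : ℕ, (1 - q ^ (n + 1))

theorem tendsto_eulerProd {q : ℂ} (hq : ‖q‖ < 1) :
    Tendsto (fun N => ∏ i ∈ Finset.range N, (1 - q ^ (i + 1))) atTop (𝓝 (eulerProd q)) :=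
  (ModularForm.multipliable_one_sub_pow hq).hasProd.tendsto_prod_nat

theorem one_sub_pow_ne_zero {q : ℂ} (hq : ‖q‖ < 1) (i : ℕ) : 1 - q ^ (i + 1) ≠ 0 := by
  intro h
  have : ‖q ^ (i + 1)‖ < 1 := by
    rw [norm_pow]; exact pow_lt_one₀ (norm_nonneg _) hq (by simp)
  rw [← sub_eq_zero.1 h, norm_one] at this
  exact lt_irrefl _ this

theorem eulerProd_ne_zero {q : ℂ} (hq : ‖q‖ < 1) : eulerProd q ≠ 0 := by
  refine tprod_one_add_ne_zero_of_summable (f := fun n => -q ^ (n + 1))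
    (fun i => by simpa [← sub_eq_add_neg] using one_sub_pow_ne_zero hq i) ?_
  simpa using (summable_nat_add_iff 1).mpr (summable_geometric_of_lt_one (norm_nonneg _) hq)

theorem tendsto_inv_eulerProd {q : ℂ} (hq : ‖q‖ < 1) :
    Tendsto (fun N => (∏ i ∈ Finset.range N, (1 - q ^ (i + 1)))⁻¹) atTop (𝓝 (eulerProd q)⁻¹) :=
  (tendsto_eulerProd hq).inv₀ (eulerProd_ne_zero hq)

/-- A damped triangle inequality for the factors of the partition generating function. -/
theorem norm_inv_one_sub_le {z : ℂ} (hz : ‖z‖ < 1) :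
    ‖(1 - z)⁻¹‖ ≤ (1 - ‖z‖)⁻¹ * Real.exp (-(2 / 5) * (‖z‖ - z.re)) := by
  set r := ‖z‖ with hr
  set y := r - z.re with hy
  have hy0 : 0 ≤ y := sub_nonneg.2 (Complex.re_le_norm z)
  have hy2 : y ≤ 2 := by
    have := (abs_le.1 (Complex.abs_re_le_norm z)).1
    linarith
  have hr0 : 0 ≤ r := norm_nonneg z
  have hnorm : ‖1 - z‖ ^ 2 = (1 - r) ^ 2 + 2 * y := by
    have h1 : ‖1 - z‖ ^ 2 = (1 - z.re) ^ 2 + z.im ^ 2 := by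
      rw [Complex.sq_norm, Complex.normSq_apply]; simp; ring
    have h2 : r ^ 2 = z.re ^ 2 + z.im ^ 2 := by
      rw [hr, Complex.sq_norm, Complex.normSq_apply]; ring
    rw [h1]; linear_combination -h2
  have hexp : Real.exp (4 / 5 * y) ≤ 1 + 2 * y := by
    have hconv := convexOn_exp.2 (Set.mem_univ 0) (Set.mem_univ (8 / 5))
      (show 0 ≤ 1 - y / 2 by linarith) (show 0 ≤ y / 2 by linarith) (by ring)
    simp only [smul_eq_mul, mul_zero, zero_add, Real.exp_zero, mul_one] at hconv
    have h85 : Real.exp (8 / 5) ≤ 5 := by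
      have : Real.exp (8 / 5) = Real.exp 1 ^ ((8 : ℝ) / 5) := by
        rw [← Real.exp_mul]; norm_num
      rw [this]
      calc Real.exp 1 ^ ((8 : ℝ) / 5) ≤ (2.7183 : ℝ) ^ ((8 : ℝ) / 5) := by
            gcongr; linarith [Real.exp_one_lt_d9]
        _ ≤ ((5 : ℝ) ^ ((5 : ℝ) / 8)) ^ ((8 : ℝ) / 5) := by
            gcongr
            rw [← Real.rpow_le_rpow_iff (z := 8) (by norm_num) (by positivity) (by norm_num),
              ← Real.rpow_mul (by norm_num)]
            norm_num
        _ = 5 := by rw [← Real.rpow_mul (by norm_num)]; norm_num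
    rw [show 4 / 5 * y = y / 2 * (8 / 5) by ring]
    nlinarith
  have hpos : 0 < 1 - r := by linarith
  have hz1 : 0 < ‖1 - z‖ := by
    rw [norm_pos_iff, sub_ne_zero]
    rintro rfl
    simp at hr
    linarith
  rw [norm_inv, ← div_eq_inv_mul, inv_eq_one_div, div_le_div_iff₀ hz1 hpos, one_mul]
  refine le_of_sq_le_sq ?_ (by positivity)
  rw [mul_pow, hnorm, ← Real.exp_nat_mul]
  have : Real.exp ((2 : ℕ) * (-(2 / 5) * y)) * Real.exp (4 / 5 * y) = 1 := by
    rw [← Real.exp_add]; norm_num; ring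
  have hsq : (1 - r) ^ 2 ≤ 1 := by nlinarith
  have h3 : (1 - r) ^ 2 * (1 + 2 * y) ≤ (1 - r) ^ 2 + 2 * y := by nlinarith
  calc (1 - r) ^ 2 = Real.exp ((2 : ℕ) * (-(2 / 5) * y)) * ((1 - r) ^ 2 * Real.exp (4 / 5 * y)) := by
        linear_combination -(1 - r) ^ 2 * this
    _ ≤ _ := by 
        gcongr
        exact (mul_le_mul_of_nonneg_left hexp (sq_nonneg _)).trans h3

theorem norm_inv_prod_le {q : ℂ} (hq : ‖q‖ < 1) (N : ℕ) :
    ‖(∏ i ∈ Finset.range N, (1 - q ^ (i + 1)))⁻¹‖ ≤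
      ‖(∏ i ∈ Finset.range N, (1 - (‖q‖ : ℂ) ^ (i + 1)))⁻¹‖ *
        Real.exp (-(2 / 5) * ∑ i ∈ Finset.range N, (‖q‖ ^ (i + 1) - (q ^ (i + 1)).re)) := by
  rw [← Finset.prod_inv_distrib, ← Finset.prod_inv_distrib, norm_prod, norm_prod, Finset.mul_sum,
    Real.exp_sum, ← Finset.prod_mul_distrib]
  refine Finset.prod_le_prod (fun _ _ => norm_nonneg _) fun i _ => ?_
  have hlt : ‖q ^ (i + 1)‖ < 1 := by
    rw [norm_pow]; exact pow_lt_one₀ (norm_nonneg _) hq (by simp)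
  have h := norm_inv_one_sub_le hlt
  have h2 : ‖(1 - (‖q‖ : ℂ) ^ (i + 1))⁻¹‖ = (1 - ‖q ^ (i + 1)‖)⁻¹ := by
    rw [norm_inv, ← Complex.ofReal_pow, ← Complex.ofReal_one, ← Complex.ofReal_sub,
      Complex.norm_real, ← norm_pow, Real.norm_of_nonneg (by linarith)]
  rw [h2]
  simpa using h

theorem norm_inv_eulerProd_le {q : ℂ} (hq : ‖q‖ < 1) :
    ‖(eulerProd q)⁻¹‖ ≤ ‖(eulerProd (‖q‖ : ℂ))⁻¹‖ *
      Real.exp (-(2 / 5) * ((1 - ‖q‖)⁻¹ - ‖1 - q‖⁻¹)) := by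
  have hr : ‖(‖q‖ : ℂ)‖ < 1 := by simpa using hq
  have hs1 : HasSum (fun i : ℕ => ‖q‖ ^ (i + 1)) (‖q‖ * (1 - ‖q‖)⁻¹) := by
    simpa [pow_succ'] using (hasSum_geometric_of_lt_one (norm_nonneg q) hq).mul_left ‖q‖
  have hs2 : HasSum (fun i : ℕ => (q ^ (i + 1)).re) (q * (1 - q)⁻¹).re := by
    have := (hasSum_geometric_of_norm_lt_one hq).mul_left q
    simpa [pow_succ'] using Complex.hasSum_re this
  have hlim := (tendsto_inv_eulerProd hr).norm.mul
    (((hs1.sub hs2).tendsto_sum_nat.const_mul (-(2 / 5))).rexp)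
  have h := le_of_tendsto_of_tendsto' (tendsto_inv_eulerProd hq).norm hlim
    (fun N => norm_inv_prod_le hq N)
  refine h.trans ?_
  gcongr ‖(eulerProd (‖q‖ : ℂ))⁻¹‖ * Real.exp ?_
  have hq1 : 1 - q ≠ 0 := by simpa using one_sub_pow_ne_zero hq 0
  have e1 : q * (1 - q)⁻¹ = (1 - q)⁻¹ - 1 := by field_simp; ring
  have e2 : ‖q‖ * (1 - ‖q‖)⁻¹ = (1 - ‖q‖)⁻¹ - 1 := by
    have : 1 - ‖q‖ ≠ 0 := by linarith
    field_simp; ring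
  rw [e1, e2, Complex.sub_re, Complex.one_re]
  have := Complex.re_le_norm (1 - q)⁻¹
  rw [norm_inv] at this
  linarith

theorem norm_inv_prod_le_const {t : ℝ} (ht : 0 < t) :
    ∃ B : ℝ, ∀ (θ : ℝ) (N : ℕ), ‖(∏ i ∈ Finset.range N, (1 - circlePt t θ ^ (i + 1)))⁻¹‖ ≤ B := by
  have hr : ‖((Real.exp (-t) : ℝ) : ℂ)‖ < 1 := by
    rw [Complex.norm_real, Real.norm_of_nonneg (Real.exp_pos _).le]; simpa using ht
  obtain ⟨B, hB⟩ := (tendsto_inv_eulerProd hr).norm.bddAbove_range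
  refine ⟨B, fun θ N => (norm_inv_prod_le (norm_circlePt_lt_one ht θ) N).trans ?_⟩
  rw [norm_circlePt]
  refine (mul_le_of_le_one_right (norm_nonneg _) ?_).trans (hB ⟨N, rfl⟩)
  rw [Real.exp_le_one_iff, neg_mul, neg_nonpos]
  refine mul_nonneg (by norm_num) (Finset.sum_nonneg fun i _ => sub_nonneg.2 ?_)
  rw [← norm_circlePt t θ, ← norm_pow]
  exact Complex.re_le_norm _

/-- Cauchy's formula for the partition numbers. -/
theorem integral_inv_eulerProd (m : ℕ) {t : ℝ} (ht : 0 < t) :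
    ∫ θ in (-π)..π, (eulerProd (circlePt t θ))⁻¹ * Complex.exp (m * (t + θ * Complex.I)) =
      2 * π * p m := by
  obtain ⟨B, hB⟩ := norm_inv_prod_le_const ht
  have hc := continuous_circlePt t
  have h1 : Tendsto (fun N => ∫ θ in (-π)..π,
      (∏ i ∈ Finset.range N, (1 - circlePt t θ ^ (i + 1)))⁻¹ *
        Complex.exp (m * (t + θ * Complex.I))) atTop
      (𝓝 (∫ θ in (-π)..π, (eulerProd (circlePt t θ))⁻¹ *
        Complex.exp (m * (t + θ * Complex.I)))) := by
    refine intervalIntegral.tendsto_integral_filter_of_dominated_convergence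
      (fun _ => B * Real.exp (m * t)) (.of_forall fun N => ?_) (.of_forall fun N => ?_) (by simp)
      (.of_forall fun θ _ => (tendsto_inv_eulerProd (norm_circlePt_lt_one ht θ)).mul_const _)
    · refine Continuous.aestronglyMeasurable (Continuous.mul (Continuous.inv₀ ?_ ?_) ?_)
      · fun_prop
      · exact fun θ => Finset.prod_ne_zero_iff.2 fun i _ =>
          one_sub_pow_ne_zero (norm_circlePt_lt_one ht θ) i
      · fun_prop
    · refine .of_forall fun θ _ => ?_
      rw [norm_mul, Complex.norm_exp]
      have : (m * (t + θ * Complex.I) : ℂ).re = m * t := by simp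
      rw [this]
      gcongr
      exact hB θ N
  have h2 : ∀ N, ∫ θ in (-π)..π, (∏ i ∈ Finset.range N, (1 - circlePt t θ ^ (i + 1)))⁻¹ *
        Complex.exp (m * (t + θ * Complex.I)) =
      2 * π * PowerSeries.coeff m (geomProd (Finset.range N)) := by
    intro N
    refine integral_powerSeries_mul_exp (t := t)
      (f := fun q => (∏ i ∈ Finset.range N, (1 - q ^ (i + 1)))⁻¹) ?_
      (fun θ => (hasSum_coeff_geomProd _ (norm_circlePt_lt_one ht θ)).2) m
    have := (hasSum_coeff_geomProd (Finset.range N) (norm_circlePt_lt_one ht 0)).1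
    simpa only [norm_mul, norm_pow, norm_circlePt] using this
  simp_rw [h2] at h1
  exact tendsto_nhds_unique h1 ((tendsto_coeff_geomProd m).const_mul _)

/-- The square root of `I * a` splits for `a` in the right half plane. -/
lemma sqrt_I_mul {a : ℂ} (ha : 0 < a.re) :
    Complex.sqrt (Complex.I * a) = Complex.sqrt Complex.I * Complex.sqrt a := by
  have ha0 : a ≠ 0 := by rintro rfl; simp at ha
  have harg := abs_lt.mp (Complex.abs_arg_lt_pi_div_two_iff.mpr (Or.inl ha))
  rw [sqrt_eq_exp (mul_ne_zero Complex.I_ne_zero ha0),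
    sqrt_eq_exp Complex.I_ne_zero, sqrt_eq_exp ha0,
    Complex.log_mul Complex.I_ne_zero ha0, ← Complex.exp_add, add_div]
  rw [Complex.arg_I]
  constructor <;> linarith [harg.1, harg.2, Real.pi_pos]

lemma eta_I_mul (s : ℂ) :
    ModularForm.eta (Complex.I * (s / (2 * π))) =
      Complex.exp (-s / 24) * eulerProd (Complex.exp (-s)) := by
  have hpi : (π : ℂ) ≠ 0 := by exact_mod_cast Real.pi_ne_zero
  have h : 2 * π * Complex.I * (Complex.I * (s / (2 * π))) = -s := by
    field_simp
    rw [Complex.I_sq]; ring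
  simp only [ModularForm.eta, Function.Periodic.qParam, ModularForm.eta_q_eq_pow, eulerProd, h]
  norm_num

/-- The modular transformation of the partition generating function. -/
lemma inv_eulerProd_exp_neg {s : ℂ} (hs : 0 < s.re) :
    (eulerProd (Complex.exp (-s)))⁻¹ =
      Complex.sqrt (s / (2 * π)) * Complex.exp (π ^ 2 / 6 / s - s / 24) *
        (eulerProd (Complex.exp (-(4 * π ^ 2 / s))))⁻¹ := by
  have hs0 : s ≠ 0 := by rintro rfl; simp at hs
  have hpi : (π : ℂ) ≠ 0 := by exact_mod_cast Real.pi_ne_zero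
  have ha : 0 < (s / (2 * π)).re := by
    have : (s / (2 * π)) = s / ((2 * π : ℝ) : ℂ) := by push_cast; rfl
    rw [this, Complex.div_ofReal_re]; positivity
  have hmem : Complex.I * (s / (2 * π)) ∈ UpperHalfPlane.upperHalfPlaneSet := by
    simpa [UpperHalfPlane.upperHalfPlaneSet] using ha
  have key := ModularForm.eta_comp_eq_csqrt_I_inv hmem
  have hinv : -1 / (Complex.I * (s / (2 * π))) =
      Complex.I * (4 * π ^ 2 / s / (2 * π)) := by
    field_simp
    rw [Complex.I_sq]; ring
  have hI : Complex.sqrt Complex.I ≠ 0 := by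
    rw [sqrt_eq_exp Complex.I_ne_zero]; exact Complex.exp_ne_zero _
  simp only [Function.comp_apply, Pi.smul_apply, Pi.mul_apply, smul_eq_mul] at key
  rw [hinv, eta_I_mul, eta_I_mul, sqrt_I_mul ha, mul_assoc (Complex.sqrt Complex.I),
    inv_mul_cancel_left₀ hI] at key
  have hP : eulerProd (Complex.exp (-s)) ≠ 0 := by
    apply eulerProd_ne_zero
    rw [Complex.norm_exp]; simpa using hs
  have hP' : eulerProd (Complex.exp (-(4 * π ^ 2 / s))) ≠ 0 := by
    apply eulerProd_ne_zero
    rw [Complex.norm_exp, Real.exp_lt_one_iff, Complex.neg_re, neg_lt_zero]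
    have : (4 * π ^ 2 / s : ℂ) = ((4 * π ^ 2 : ℝ) : ℂ) * s⁻¹ := by push_cast; rfl
    rw [this, Complex.re_ofReal_mul, Complex.inv_re]
    have := Complex.normSq_pos.mpr hs0
    positivity
  have he : Complex.exp (π ^ 2 / 6 / s - s / 24) =
      Complex.exp (-s / 24) * (Complex.exp (-(4 * π ^ 2 / s) / 24))⁻¹ := by
    rw [← Complex.exp_neg, ← Complex.exp_add]; congr 1; ring
  rw [he]
  have := Complex.exp_ne_zero (-(4 * π ^ 2 / s) / 24)
  generalize Complex.exp (-(4 * π ^ 2 / s) / 24) = a at *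
  generalize eulerProd (Complex.exp (-(4 * π ^ 2 / s))) = b at *
  generalize Complex.exp (-s / 24) = e at *
  field_simp
  linear_combination key

lemma complex_sqrt_sq (z : ℂ) : Complex.sqrt z ^ 2 = z := by
  simp [Complex.sqrt]

lemma norm_complex_sqrt_sq (z : ℂ) : ‖Complex.sqrt z‖ ^ 2 = ‖z‖ := by
  rw [← norm_pow, complex_sqrt_sq]

lemma complex_sqrt_ne_zero {z : ℂ} (hz : z ≠ 0) : Complex.sqrt z ≠ 0 := by
  rw [sqrt_eq_exp hz]; exact Complex.exp_ne_zero _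

lemma complex_sqrt_ofReal_mul {a : ℝ} (ha : 0 < a) {z : ℂ} (hz : z ≠ 0) :
    Complex.sqrt (a * z) = (√a : ℝ) * Complex.sqrt z := by
  have ha' : (a : ℂ) ≠ 0 := by exact_mod_cast ha.ne'
  rw [sqrt_eq_exp (mul_ne_zero ha' hz), sqrt_eq_exp hz, Complex.log_ofReal_mul ha hz, add_div,
    Complex.exp_add, Real.sqrt_eq_rpow, Real.rpow_def_of_pos ha]
  push_cast
  ring_nf

lemma hasDerivAt_sqrt_one_add_mul_I (y : ℝ) :
    HasDerivAt (fun y : ℝ => Complex.sqrt (1 + y * Complex.I))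
      (Complex.I / (2 * Complex.sqrt (1 + y * Complex.I))) y := by
  have hre : 0 < (1 + y * Complex.I).re := by simp
  have hz0 : (1 + y * Complex.I) ≠ 0 := by intro h; rw [h] at hre; simp at hre
  have h1 : HasDerivAt (fun y : ℝ => 1 + (y : ℂ) * Complex.I) Complex.I y := by
    simpa using ((Complex.ofRealCLM.hasDerivAt (x := y)).mul_const Complex.I).const_add 1
  have h2 := (Complex.hasDerivAt_sqrt (z := 1 + y * Complex.I) (Or.inl hre)).comp y h1
  refine h2.congr_deriv ?_
  have : (1 + y * Complex.I) ^ (-1 / 2 : ℂ) = (Complex.sqrt (1 + y * Complex.I))⁻¹ := by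
    rw [Complex.sqrt, ← Complex.cpow_neg]; congr 1; norm_num
  rw [this]
  field_simp

/-- The tail of a Gaussian integral with complex parameter. -/
lemma norm_integral_gaussian_sub_le {b : ℂ} (hb : 1 ≤ b.re) :
    ‖(∫ x in (0 : ℝ)..1, Complex.exp (-b * x ^ 2)) - Complex.sqrt (π / b) / 2‖ ≤
      Real.exp (1 - b.re) := by
  have hb0 : 0 < b.re := by linarith
  have hint := integrable_cexp_neg_mul_sq hb0
  have hadd := intervalIntegral.integral_interval_add_Ioi (a := 0) (b := 1)
    hint.integrableOn hint.integrableOn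
  rw [integral_gaussian_complex_Ioi hb0] at hadd
  have hs : Complex.sqrt (π / b) = (π / b) ^ (1 / 2 : ℂ) := by
    rw [Complex.sqrt, one_div]
  rw [hs, ← hadd, sub_add_cancel_left, norm_neg]
  have hg := (integrable_exp_neg_mul_sq (b := 1) one_pos).const_mul (Real.exp (1 - b.re))
  calc ‖∫ x in Set.Ioi (1 : ℝ), Complex.exp (-b * x ^ 2)‖
      ≤ ∫ x in Set.Ioi (1 : ℝ), Real.exp (1 - b.re) * Real.exp (-1 * x ^ 2) := by
        apply MeasureTheory.norm_integral_le_of_norm_le hg.integrableOn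
        filter_upwards [MeasureTheory.ae_restrict_mem measurableSet_Ioi] with x hx
        rw [norm_cexp_neg_mul_sq, ← Real.exp_add]
        apply Real.exp_le_exp.mpr
        have hx1 : 1 ≤ x ^ 2 := by have : 1 < x := hx; nlinarith
        nlinarith
    _ ≤ ∫ x in Set.Ioi (0 : ℝ), Real.exp (1 - b.re) * Real.exp (-1 * x ^ 2) := by
        apply MeasureTheory.setIntegral_mono_set hg.integrableOn
        · exact Filter.Eventually.of_forall fun x => by positivity
        · exact (Set.Ioi_subset_Ioi zero_le_one).eventuallyLE
    _ = Real.exp (1 - b.re) * (√π / 2) := by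
        rw [MeasureTheory.integral_const_mul, integral_gaussian_Ioi, div_one]
    _ ≤ Real.exp (1 - b.re) := by
        have : √π ≤ 2 := by
          rw [Real.sqrt_le_left (by norm_num)]; linarith [Real.pi_le_four]
        have := Real.exp_pos (1 - b.re)
        nlinarith

/-- A primitive of a Gaussian vanishing at the origin is a radial integral. -/
lemma primitive_eq_integral {f H : ℂ → ℂ} (hf : Continuous f) (hH : ∀ u, HasDerivAt H (f u) u)
    (hH0 : H 0 = 0) (u : ℂ) : H u = u * ∫ r in (0 : ℝ)..1, f (r * u) := by
  have hd : ∀ r ∈ Set.uIcc (0 : ℝ) 1, HasDerivAt (fun r : ℝ => H (r * u)) (f (r * u) * u) r := by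
    intro r _
    have h1 : HasDerivAt (fun r : ℝ => (r : ℂ) * u) u r := by
      simpa using (Complex.ofRealCLM.hasDerivAt (x := r)).mul_const u
    exact (hH (r * u)).comp r h1
  have := intervalIntegral.integral_eq_sub_of_hasDerivAt hd
    (Continuous.intervalIntegrable (by fun_prop) _ _)
  rw [intervalIntegral.integral_mul_const] at this
  simp only [Complex.ofReal_one, one_mul, Complex.ofReal_zero, zero_mul, hH0, sub_zero] at this
  rw [← this, mul_comm]

/-- A primitive of `w ^ 2 * exp (c * (w ^ 2 + w⁻¹ ^ 2))` in terms of a primitive `H` of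
`exp (c * u ^ 2)`. -/
noncomputable def saddlePrim (H : ℂ → ℂ) (c : ℝ) (w : ℂ) : ℂ :=
  w * Complex.exp (c * (w ^ 2 + w⁻¹ ^ 2)) / (2 * c) +
    (1 / 2 - 1 / (4 * c)) * (Real.exp (2 * c) * H (w - w⁻¹)) -
    (1 / 2 + 1 / (4 * c)) * (Real.exp (-(2 * c)) * H (w + w⁻¹))

lemma hasDerivAt_saddlePrim {H : ℂ → ℂ} {c : ℝ} (hc : c ≠ 0)
    (hH : ∀ u, HasDerivAt H (Complex.exp (c * u ^ 2)) u) {w : ℂ} (hw : w ≠ 0) :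
    HasDerivAt (saddlePrim H c) (w ^ 2 * Complex.exp (c * (w ^ 2 + w⁻¹ ^ 2))) w := by
  have hc' : (c : ℂ) ≠ 0 := by exact_mod_cast hc
  have hinv := hasDerivAt_inv hw
  have hid := hasDerivAt_id' w
  have h1 := ((hid.mul ((((hid.pow 2).add (hinv.pow 2)).const_mul (c : ℂ)).cexp)).div_const
    (2 * (c : ℂ)))
  have h2 := (((hH (w - w⁻¹)).comp w (hid.sub hinv)).const_mul
    (Real.exp (2 * c) : ℂ)).const_mul (1 / 2 - 1 / (4 * (c : ℂ)))
  have h3 := (((hH (w + w⁻¹)).comp w (hid.add hinv)).const_mul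
    (Real.exp (-(2 * c)) : ℂ)).const_mul (1 / 2 + 1 / (4 * (c : ℂ)))
  refine ((h1.add h2).sub h3).congr_deriv ?_
  have e1 : (Real.exp (2 * c) : ℂ) * (Complex.exp (c * (w - w⁻¹) ^ 2) * (1 - -(w ^ 2)⁻¹)) =
      Complex.exp (c * (w ^ 2 + w⁻¹ ^ 2)) * (1 + (w ^ 2)⁻¹) := by
    rw [← mul_assoc, Complex.ofReal_exp, ← Complex.exp_add, sub_neg_eq_add]
    congr 2
    push_cast
    field_simp
    ring
  have e2 : (Real.exp (-(2 * c)) : ℂ) * (Complex.exp (c * (w + w⁻¹) ^ 2) * (1 + -(w ^ 2)⁻¹)) =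
      Complex.exp (c * (w ^ 2 + w⁻¹ ^ 2)) * (1 - (w ^ 2)⁻¹) := by
    rw [← mul_assoc, Complex.ofReal_exp, ← Complex.exp_add, ← sub_eq_add_neg]
    congr 2
    push_cast
    field_simp
    ring
  rw [e1, e2]
  simp only [Pi.pow_apply, Pi.add_apply]
  generalize Complex.exp (c * (w ^ 2 + w⁻¹ ^ 2)) = X
  push_cast
  field_simp
  ring

/-- The value of `saddlePrim` at the square root of `1 ± I`. -/
lemma norm_saddlePrim_sqrt_sub_le {H : ℂ → ℂ} {c : ℝ} (hc : 2 ≤ c)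
    (hH : ∀ u, HasDerivAt H (Complex.exp (c * u ^ 2)) u) (hH0 : H 0 = 0) {z : ℂ}
    (hz : z.re = 1) (hz' : z.im ^ 2 = 1) :
    ‖saddlePrim H c (Complex.sqrt z) -
        (1 / 2 - 1 / (4 * c)) * (Real.exp (2 * c) * ((z - 1) / 2 * (√(π / c) : ℝ)))‖ ≤
      9 * Real.exp (3 / 2 * c) := by
  have hz0 : z ≠ 0 := by rintro rfl; simp at hz
  have hc0 : 0 < c := by linarith
  have hcC : (c : ℂ) ≠ 0 := by exact_mod_cast hc0.ne'
  have hnz : Complex.normSq z = 2 := by rw [Complex.normSq_apply, hz]; nlinarith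
  have hzinv : z⁻¹ = 1 - z / 2 := by
    have : z * (1 - z / 2) = 1 := by
      apply Complex.ext <;> simp [hz] <;> nlinarith
    exact (eq_inv_of_mul_eq_one_right this).symm
  set w := Complex.sqrt z with hw
  have hw2 : w ^ 2 = z := complex_sqrt_sq z
  have hw0 : w ≠ 0 := complex_sqrt_ne_zero hz0
  have hwi2 : w⁻¹ ^ 2 = 1 - z / 2 := by rw [inv_pow, hw2, hzinv]
  have hwn : ‖w‖ ^ 4 = 2 := by
    have : ‖w‖ ^ 2 = ‖z‖ := norm_complex_sqrt_sq z
    have h2 : ‖z‖ ^ 2 = 2 := by rw [← Complex.normSq_eq_norm_sq, hnz]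
    rw [← h2, ← this]; ring
  have hwge : 1 ≤ ‖w‖ := by
    by_contra! h
    have := pow_lt_one₀ (norm_nonneg w) h (n := 4) (by norm_num)
    linarith
  have hwle : ‖w‖ ≤ 2 := by
    by_contra! h
    have : (2 : ℝ) ^ 4 < ‖w‖ ^ 4 := by gcongr
    linarith
  have hwi : ‖w⁻¹‖ ≤ 1 := by rw [norm_inv]; exact inv_le_one_of_one_le₀ hwge
  have hcont : Continuous fun u : ℂ => Complex.exp (c * u ^ 2) := by fun_prop
  have hX : ‖w * Complex.exp (c * (w ^ 2 + w⁻¹ ^ 2)) / (2 * c)‖ ≤ Real.exp (3 / 2 * c) := by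
    have hre : (c * (w ^ 2 + w⁻¹ ^ 2) : ℂ).re = 3 / 2 * c := by
      rw [Complex.re_ofReal_mul, hw2, hwi2]
      simp [hz]; ring
    have hden : ‖(2 * c : ℂ)‖ = 2 * c := by simp [abs_of_pos hc0]
    rw [norm_div, norm_mul, Complex.norm_exp, hre, hden, div_le_iff₀ (by positivity)]
    have := Real.exp_pos (3 / 2 * c)
    nlinarith
  have hU : ‖H (w - w⁻¹) - (z - 1) / 2 * (√(π / c) : ℝ)‖ ≤ 3 * Real.exp (1 - c / 2) := by
    set b : ℂ := c * z⁻¹ with hb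
    have hbre : b.re = c / 2 := by
      rw [hb, Complex.re_ofReal_mul, hzinv]; simp [hz]; ring
    have hexp : ∀ r : ℝ, Complex.exp (c * (r * (w - w⁻¹)) ^ 2) = Complex.exp (-b * r ^ 2) := by
      intro r
      have : (w - w⁻¹) ^ 2 = -z⁻¹ := by
        have : (w - w⁻¹) ^ 2 = w ^ 2 + w⁻¹ ^ 2 - 2 * (w * w⁻¹) := by ring
        rw [this, mul_inv_cancel₀ hw0, hw2, hwi2, hzinv]; ring
      rw [mul_pow, this, hb]; ring_nf
    have hs : Complex.sqrt (π / b) = (√(π / c) : ℝ) * w := by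
      rw [hw, ← complex_sqrt_ofReal_mul (by positivity) hz0, hb]
      congr 1
      push_cast
      field_simp
    have hmain : (z - 1) / 2 * (√(π / c) : ℝ) = (w - w⁻¹) * (Complex.sqrt (π / b) / 2) := by
      rw [hs, ← hw2]
      field_simp
    rw [primitive_eq_integral hcont hH hH0, hmain, ← mul_sub, norm_mul]
    simp only [hexp]
    have hle := norm_integral_gaussian_sub_le (b := b) (by rw [hbre]; linarith)
    rw [hbre] at hle
    have : ‖w - w⁻¹‖ ≤ 3 := (norm_sub_le _ _).trans (by linarith)
    gcongr
  have hV : ‖H (w + w⁻¹)‖ ≤ 3 * Real.exp (7 / 2 * c) := by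
    rw [primitive_eq_integral hcont hH hH0, norm_mul]
    have h1 : ‖w + w⁻¹‖ ≤ 3 := (norm_add_le _ _).trans (by linarith)
    have h2 : ‖∫ r in (0 : ℝ)..1, Complex.exp (c * (r * (w + w⁻¹)) ^ 2)‖ ≤
        Real.exp (7 / 2 * c) * |1 - 0| := by
      apply intervalIntegral.norm_integral_le_of_norm_le_const
      intro r hr
      rw [Set.uIoc_of_le zero_le_one] at hr
      rw [Complex.norm_exp, Real.exp_le_exp]
      have : (c * (r * (w + w⁻¹)) ^ 2 : ℂ) = ((c * r ^ 2 : ℝ) : ℂ) * (3 + z / 2) := by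
        have : (w + w⁻¹) ^ 2 = w ^ 2 + w⁻¹ ^ 2 + 2 * (w * w⁻¹) := by ring
        rw [mul_pow, this, mul_inv_cancel₀ hw0, hw2, hwi2]; push_cast; ring
      rw [this, Complex.re_ofReal_mul]
      have h3 : (3 + z / 2).re = 7 / 2 := by simp [hz]; norm_num
      rw [h3]
      have : r ^ 2 ≤ 1 := by nlinarith [hr.1, hr.2]
      nlinarith
    have h3 : |(1 : ℝ) - 0| = 1 := by norm_num
    rw [h3, mul_one] at h2
    gcongr
  have hk1 : ‖(1 / 2 - 1 / (4 * c) : ℂ)‖ ≤ 1 / 2 := by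
    have : (1 / 2 - 1 / (4 * c) : ℂ) = ((1 / 2 - 1 / (4 * c) : ℝ) : ℂ) := by push_cast; rfl
    rw [this, Complex.norm_real, Real.norm_eq_abs, abs_le]
    have : 1 / (4 * c) ≤ 1 / 8 := by
      apply one_div_le_one_div_of_le <;> linarith
    have : 0 < 1 / (4 * c) := by positivity
    constructor <;> linarith
  have hk2 : ‖(1 / 2 + 1 / (4 * c) : ℂ)‖ ≤ 1 := by
    have : (1 / 2 + 1 / (4 * c) : ℂ) = ((1 / 2 + 1 / (4 * c) : ℝ) : ℂ) := by push_cast; rfl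
    rw [this, Complex.norm_real, Real.norm_eq_abs, abs_le]
    have : 1 / (4 * c) ≤ 1 / 8 := by
      apply one_div_le_one_div_of_le <;> linarith
    have : 0 < 1 / (4 * c) := by positivity
    constructor <;> linarith
  have hU' : ‖(1 / 2 - 1 / (4 * c) : ℂ) * (Real.exp (2 * c) *
      (H (w - w⁻¹) - (z - 1) / 2 * (√(π / c) : ℝ)))‖ ≤ 5 * Real.exp (3 / 2 * c) := by
    rw [norm_mul, norm_mul, Complex.norm_real, Real.norm_eq_abs, Real.abs_exp]
    calc _ ≤ 1 / 2 * (Real.exp (2 * c) * (3 * Real.exp (1 - c / 2))) := by gcongr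
      _ = 3 / 2 * Real.exp 1 * Real.exp (3 / 2 * c) := by
          have : Real.exp (2 * c) * Real.exp (1 - c / 2) =
              Real.exp 1 * Real.exp (3 / 2 * c) := by
            rw [← Real.exp_add, ← Real.exp_add]; congr 1; ring
          linear_combination 3 / 2 * this
      _ ≤ 5 * Real.exp (3 / 2 * c) := by
          gcongr
          linarith [Real.exp_one_lt_d9]
  have hV' : ‖(1 / 2 + 1 / (4 * c) : ℂ) * (Real.exp (-(2 * c)) * H (w + w⁻¹))‖ ≤
      3 * Real.exp (3 / 2 * c) := by
    rw [norm_mul, norm_mul, Complex.norm_real, Real.norm_eq_abs, Real.abs_exp]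
    calc _ ≤ 1 * (Real.exp (-(2 * c)) * (3 * Real.exp (7 / 2 * c))) := by gcongr
      _ = 3 * Real.exp (3 / 2 * c) := by
          have : Real.exp (-(2 * c)) * Real.exp (7 / 2 * c) = Real.exp (3 / 2 * c) := by
            rw [← Real.exp_add]; congr 1; ring
          linear_combination 3 * this
  have hsplit : saddlePrim H c w -
      (1 / 2 - 1 / (4 * c)) * (Real.exp (2 * c) * ((z - 1) / 2 * (√(π / c) : ℝ))) =
      w * Complex.exp (c * (w ^ 2 + w⁻¹ ^ 2)) / (2 * c) +
      (1 / 2 - 1 / (4 * c) : ℂ) * (Real.exp (2 * c) *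
        (H (w - w⁻¹) - (z - 1) / 2 * (√(π / c) : ℝ))) -
      (1 / 2 + 1 / (4 * c) : ℂ) * (Real.exp (-(2 * c)) * H (w + w⁻¹)) := by
    rw [saddlePrim]; ring
  rw [hsplit]
  refine (norm_sub_le _ _).trans ?_
  refine (add_le_add_left (norm_add_le _ _) _).trans ?_
  linarith

/-- The saddle point integral, evaluated up to an exponentially smaller error. -/
lemma norm_saddle_integral_sub_le {c : ℝ} (hc : 2 ≤ c) :
    ‖(∫ y in (-1 : ℝ)..1, Complex.sqrt (1 + y * Complex.I) *
        Complex.exp (c * ((1 + y * Complex.I) + (1 + y * Complex.I)⁻¹))) -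
        (√(π / c) * Real.exp (2 * c) * (1 - 1 / (2 * c)) : ℝ)‖ ≤ 36 * Real.exp (3 / 2 * c) := by
  have hc0 : c ≠ 0 := by linarith
  obtain ⟨H', hH'⟩ := Differentiable.isExactOn_univ
    (f := fun u : ℂ => Complex.exp (c * u ^ 2)) (by fun_prop)
  set H : ℂ → ℂ := fun u => H' u - H' 0 with hHdef
  have hH : ∀ u, HasDerivAt H (Complex.exp (c * u ^ 2)) u := fun u =>
    (hH' u (Set.mem_univ u)).sub_const _
  have hH0 : H 0 = 0 := by simp [hHdef]
  have hz0 : ∀ y : ℝ, (1 + y * Complex.I : ℂ) ≠ 0 := by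
    intro y h
    have := congrArg Complex.re h
    simp at this
  have hderiv : ∀ y : ℝ, HasDerivAt
      (fun y : ℝ => -2 * Complex.I * saddlePrim H c (Complex.sqrt (1 + y * Complex.I)))
      (Complex.sqrt (1 + y * Complex.I) *
        Complex.exp (c * ((1 + y * Complex.I) + (1 + y * Complex.I)⁻¹))) y := by
    intro y
    have hw := complex_sqrt_ne_zero (hz0 y)
    have h := ((hasDerivAt_saddlePrim hc0 hH hw).comp y
      (hasDerivAt_sqrt_one_add_mul_I y)).const_mul (-2 * Complex.I)
    refine h.congr_deriv ?_
    rw [inv_pow, complex_sqrt_sq]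
    nth_rw 1 [← complex_sqrt_sq (1 + y * Complex.I)]
    generalize Complex.sqrt (1 + y * Complex.I) = w at hw ⊢
    field_simp
    linear_combination -Complex.I_sq
  have hcont : Continuous fun y : ℝ => Complex.sqrt (1 + y * Complex.I) *
      Complex.exp (c * ((1 + y * Complex.I) + (1 + y * Complex.I)⁻¹)) := by
    have h1 : Continuous fun y : ℝ => Complex.sqrt (1 + y * Complex.I) :=
      continuous_iff_continuousAt.mpr fun y => (hasDerivAt_sqrt_one_add_mul_I y).continuousAt
    have h2 : Continuous fun y : ℝ => (1 + y * Complex.I : ℂ)⁻¹ :=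
      Continuous.inv₀ (by fun_prop) hz0
    fun_prop
  rw [intervalIntegral.integral_eq_sub_of_hasDerivAt (fun y _ => hderiv y)
    (hcont.intervalIntegrable _ _)]
  have h1 := norm_saddlePrim_sqrt_sub_le hc hH hH0 (z := 1 + (1 : ℝ) * Complex.I)
    (by simp) (by simp)
  have h2 := norm_saddlePrim_sqrt_sub_le hc hH hH0 (z := 1 + (-1 : ℝ) * Complex.I)
    (by simp) (by simp)
  have hsplit : ∀ a b : ℂ, -2 * Complex.I * a - -2 * Complex.I * b -
      (√(π / c) * Real.exp (2 * c) * (1 - 1 / (2 * c)) : ℝ) =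
      -2 * Complex.I * (a - (1 / 2 - 1 / (4 * c)) * (Real.exp (2 * c) *
        ((1 + (1 : ℝ) * Complex.I - 1) / 2 * (√(π / c) : ℝ)))) -
      -2 * Complex.I * (b - (1 / 2 - 1 / (4 * c)) * (Real.exp (2 * c) *
        ((1 + (-1 : ℝ) * Complex.I - 1) / 2 * (√(π / c) : ℝ)))) := by
    intro a b
    push_cast
    ring_nf
    rw [Complex.I_sq]
    ring
  rw [hsplit]
  have hn : ‖(-2 * Complex.I : ℂ)‖ = 2 := by simp
  refine (norm_sub_le _ _).trans ?_
  rw [norm_mul (-2 * Complex.I), norm_mul (-2 * Complex.I), hn]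
  linarith

lemma exists_norm_inv_eulerProd_sub_one_le :
    ∃ C > 0, ∃ ε > 0, ∀ q : ℂ, ‖q‖ < ε → ‖(eulerProd q)⁻¹ - 1‖ ≤ C * ‖q‖ := by
  have h0 : eulerProd 0 = 1 := by simp [eulerProd]
  have hd : DifferentiableAt ℂ eulerProd 0 :=
    (ModularForm.differentiableOn_tprod_one_sub_pow).differentiableAt
      (Metric.ball_mem_nhds 0 one_pos)
  have hdi : DifferentiableAt ℂ (fun q => (eulerProd q)⁻¹) 0 :=
    hd.inv (by rw [h0]; exact one_ne_zero)
  obtain ⟨C, hC, hO⟩ := hdi.isBigO_sub.exists_pos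
  obtain ⟨ε, hε, hball⟩ := Metric.eventually_nhds_iff.mp hO.bound
  refine ⟨C, hC, ε, hε, fun q hq => ?_⟩
  have := hball (y := q) (by simpa using hq)
  simpa [h0] using this

/-- Approximation of the generating function near the point `1`. -/
lemma exists_norm_inv_eulerProd_sub_le :
    ∃ C > 0, ∃ t₀ > 0, ∀ t : ℝ, 0 < t → t ≤ t₀ → ∀ θ : ℝ, |θ| ≤ t →
      ‖Complex.sqrt ((t + θ * Complex.I) / (2 * π)) *
        Complex.exp (π ^ 2 / 6 / (t + θ * Complex.I) - (t + θ * Complex.I) / 24)‖ ≤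
          Real.exp (π ^ 2 / 6 / t) ∧
      ‖(eulerProd (circlePt t θ))⁻¹ - Complex.sqrt ((t + θ * Complex.I) / (2 * π)) *
        Complex.exp (π ^ 2 / 6 / (t + θ * Complex.I) - (t + θ * Complex.I) / 24)‖ ≤
          C * Real.exp (π ^ 2 / 6 / t - 2 * π ^ 2 / t) := by
  obtain ⟨C, hC, ε, hε, hb⟩ := exists_norm_inv_eulerProd_sub_one_le
  have hsmall : ∃ t₀ > 0, t₀ ≤ 1 ∧ ∀ t : ℝ, 0 < t → t ≤ t₀ → Real.exp (-(2 * π ^ 2 / t)) < ε := by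
    refine ⟨min 1 ε, by positivity, min_le_left _ _, fun t ht htε => ?_⟩
    have h1 : t ≤ ε := htε.trans (min_le_right _ _)
    have h2 : 1 / t < Real.exp (2 * π ^ 2 / t) := by
      have := Real.add_one_le_exp (2 * π ^ 2 / t)
      have h3 : 1 / t ≤ 2 * π ^ 2 / t := by
        gcongr; nlinarith [Real.pi_gt_three]
      linarith
    rw [Real.exp_neg]
    calc (Real.exp (2 * π ^ 2 / t))⁻¹ < (1 / t)⁻¹ := by
          apply inv_strictAnti₀ (by positivity) h2
      _ = t := by simp
      _ ≤ ε := h1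
  obtain ⟨t₀, ht₀, ht₀1, hsm⟩ := hsmall
  refine ⟨C, hC, t₀, ht₀, fun t ht htt θ hθ => ?_⟩
  set s : ℂ := t + θ * Complex.I with hs
  have hsre : s.re = t := by simp [hs]
  have hsim : s.im = θ := by simp [hs]
  have hs0 : s ≠ 0 := by intro h; rw [h] at hsre; simp at hsre; exact ht.ne hsre
  have hsq : θ ^ 2 ≤ t ^ 2 := sq_le_sq' (by linarith [(abs_le.mp hθ).1]) (abs_le.mp hθ).2
  have hnsq : Complex.normSq s = t ^ 2 + θ ^ 2 := by
    rw [Complex.normSq_apply, hsre, hsim]; ring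
  have hinvre : s⁻¹.re = t / (t ^ 2 + θ ^ 2) := by rw [Complex.inv_re, hsre, hnsq]
  have hinv_le : s⁻¹.re ≤ 1 / t := by
    rw [hinvre, div_le_div_iff₀ (by positivity) ht]; nlinarith [sq_nonneg θ]
  have hinv_ge : 1 / (2 * t) ≤ s⁻¹.re := by
    rw [hinvre, div_le_div_iff₀ (by positivity) (by positivity)]; nlinarith
  have hsqrt : ‖Complex.sqrt (s / (2 * π))‖ ≤ 1 := by
    have h1 : ‖Complex.sqrt (s / (2 * π))‖ ^ 2 ≤ 1 := by
      rw [norm_complex_sqrt_sq, norm_div]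
      have : ‖(2 * π : ℂ)‖ = 2 * π := by simp [abs_of_pos Real.pi_pos]
      rw [this, div_le_one (by positivity)]
      calc ‖s‖ ≤ |s.re| + |s.im| := Complex.norm_le_abs_re_add_abs_im s
        _ ≤ 1 + 1 := by rw [hsre, hsim, abs_of_pos ht]; gcongr <;> linarith
        _ ≤ 2 * π := by linarith [Real.pi_gt_three]
    nlinarith [norm_nonneg (Complex.sqrt (s / (2 * π)))]
  have hexp : ‖Complex.exp (π ^ 2 / 6 / s - s / 24)‖ ≤ Real.exp (π ^ 2 / 6 / t) := by
    rw [Complex.norm_exp, Real.exp_le_exp]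
    have : (π ^ 2 / 6 / s - s / 24 : ℂ) =
        ((π ^ 2 / 6 : ℝ) : ℂ) * s⁻¹ - ((1 / 24 : ℝ) : ℂ) * s := by push_cast; ring
    rw [this, Complex.sub_re, Complex.re_ofReal_mul, Complex.re_ofReal_mul, hsre]
    have : π ^ 2 / 6 * s⁻¹.re ≤ π ^ 2 / 6 * (1 / t) := by gcongr
    rw [mul_one_div] at this
    linarith
  have hprod : ‖Complex.sqrt (s / (2 * π)) * Complex.exp (π ^ 2 / 6 / s - s / 24)‖ ≤
      Real.exp (π ^ 2 / 6 / t) := by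
    rw [norm_mul]
    calc _ ≤ 1 * Real.exp (π ^ 2 / 6 / t) := by gcongr
      _ = _ := one_mul _
  refine ⟨hprod, ?_⟩
  have hq : ‖Complex.exp (-(4 * π ^ 2 / s))‖ ≤ Real.exp (-(2 * π ^ 2 / t)) := by
    rw [Complex.norm_exp, Real.exp_le_exp, Complex.neg_re, neg_le_neg_iff]
    have : (4 * π ^ 2 / s : ℂ) = ((4 * π ^ 2 : ℝ) : ℂ) * s⁻¹ := by push_cast; rfl
    rw [this, Complex.re_ofReal_mul]
    calc 2 * π ^ 2 / t = 4 * π ^ 2 * (1 / (2 * t)) := by field_simp; ring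
      _ ≤ 4 * π ^ 2 * s⁻¹.re := by gcongr
  have hb' := hb _ (hq.trans_lt (hsm t ht htt))
  rw [circlePt, ← hs, inv_eulerProd_exp_neg (by rw [hsre]; exact ht)]
  rw [← mul_sub_one, norm_mul, sub_eq_add_neg (π ^ 2 / 6 / t), Real.exp_add]
  calc _ ≤ Real.exp (π ^ 2 / 6 / t) * (C * Real.exp (-(2 * π ^ 2 / t))) := by
        gcongr
        exact hb'.trans (by gcongr)
    _ = _ := by ring

/-- The generating function is exponentially smaller away from the point `1`. -/
lemma exists_norm_inv_eulerProd_le_of_le_abs :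
    ∃ C > 0, ∃ t₀ > 0, ∀ t : ℝ, 0 < t → t ≤ t₀ → ∀ θ : ℝ, t ≤ |θ| → |θ| ≤ π →
      ‖(eulerProd (circlePt t θ))⁻¹‖ ≤ C * Real.exp (π ^ 2 / 6 / t - 3 / 250 / t) := by
  obtain ⟨C, hC, t₀, ht₀, hb⟩ := exists_norm_inv_eulerProd_sub_le
  refine ⟨1 + C, by positivity, min 1 t₀, by positivity, fun t ht htt θ hθ hθπ => ?_⟩
  have ht1 : t ≤ 1 := htt.trans (min_le_left _ _)
  obtain ⟨h1, h2⟩ := hb t ht (htt.trans (min_le_right _ _)) 0 (by simpa using ht.le)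
  have hreal : ‖(eulerProd (‖circlePt t θ‖ : ℂ))⁻¹‖ ≤ (1 + C) * Real.exp (π ^ 2 / 6 / t) := by
    have he : ((‖circlePt t θ‖ : ℝ) : ℂ) = circlePt t 0 := by
      rw [norm_circlePt, circlePt]; push_cast; congr 1; ring
    rw [he]
    have h3 : Real.exp (π ^ 2 / 6 / t - 2 * π ^ 2 / t) ≤ Real.exp (π ^ 2 / 6 / t) := by
      apply Real.exp_le_exp.mpr
      have : 0 < 2 * π ^ 2 / t := by positivity
      linarith
    have h4 := norm_le_norm_add_norm_sub' ((eulerProd (circlePt t 0))⁻¹)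
      (Complex.sqrt ((t + (0 : ℝ) * Complex.I) / (2 * π)) *
        Complex.exp (π ^ 2 / 6 / (t + (0 : ℝ) * Complex.I) - (t + (0 : ℝ) * Complex.I) / 24))
    have h5 := mul_le_mul_of_nonneg_left h3 hC.le
    linarith
  have hlt := norm_circlePt_lt_one ht θ
  have hmain := norm_inv_eulerProd_le hlt
  rw [norm_circlePt] at hlt
  set r := Real.exp (-t) with hr
  have hr1 : 1 - r ≤ t := by linarith [Real.add_one_le_exp (-t)]
  have hr0 : 0 < 1 - r := by linarith
  have hrge : 9 / 25 ≤ r := by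
    have h3 : Real.exp (-1) ≤ r := Real.exp_le_exp.mpr (by linarith)
    have h4 : 9 / 25 ≤ Real.exp (-1) := by
      rw [Real.exp_neg, le_inv_comm₀ (by norm_num) (Real.exp_pos _)]
      linarith [Real.exp_one_lt_d9]
    linarith
  have hnorm : ‖1 - circlePt t θ‖ ^ 2 = (1 - r) ^ 2 + 2 * r * (1 - Real.cos θ) := by
    have hre : (circlePt t θ).re = r * Real.cos θ := by
      simp [circlePt, Complex.exp_re, hr]
    have him : (circlePt t θ).im = -(r * Real.sin θ) := by
      simp [circlePt, Complex.exp_im, hr]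
    rw [← Complex.normSq_eq_norm_sq, Complex.normSq_apply, Complex.sub_re, Complex.sub_im, hre,
      him]
    simp only [Complex.one_re, Complex.one_im]
    linear_combination r ^ 2 * Real.sin_sq_add_cos_sq θ
  have hcos : 2 / π ^ 2 * (1 - r) ^ 2 ≤ 1 - Real.cos θ := by
    have h3 := Real.cos_le_one_sub_mul_cos_sq hθπ
    have h4 : (1 - r) ^ 2 ≤ θ ^ 2 := by
      rw [← sq_abs θ]; exact pow_le_pow_left₀ hr0.le (hr1.trans hθ) 2
    have : 2 / π ^ 2 * (1 - r) ^ 2 ≤ 2 / π ^ 2 * θ ^ 2 := by gcongr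
    linarith
  have hpi2 : 1 / 5 ≤ 2 / π ^ 2 := by
    rw [div_le_div_iff₀ (by norm_num) (by positivity)]
    nlinarith [Real.pi_lt_d2, Real.pi_pos]
  have hge : 26 / 25 * (1 - r) ≤ ‖1 - circlePt t θ‖ := by
    refine abs_le_of_sq_le_sq' ?_ (norm_nonneg _) |>.2
    rw [hnorm]
    have h3 : 1 / 5 * (1 - r) ^ 2 ≤ 1 - Real.cos θ :=
      (mul_le_mul_of_nonneg_right hpi2 (sq_nonneg _)).trans hcos
    have h4 : 9 / 25 * (1 / 5 * (1 - r) ^ 2) ≤ r * (1 - Real.cos θ) := by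
      gcongr
    nlinarith [sq_nonneg (1 - r)]
  have hinv : ‖1 - circlePt t θ‖⁻¹ ≤ 97 / 100 * (1 - r)⁻¹ := by
    calc ‖1 - circlePt t θ‖⁻¹ ≤ (26 / 25 * (1 - r))⁻¹ := inv_anti₀ (by positivity) hge
      _ = 25 / 26 * (1 - r)⁻¹ := by rw [mul_inv]; norm_num
      _ ≤ 97 / 100 * (1 - r)⁻¹ := mul_le_mul_of_nonneg_right (by norm_num) (inv_nonneg.mpr hr0.le)
  have hinvt : 1 / t ≤ (1 - r)⁻¹ := by
    rw [one_div]; exact inv_anti₀ hr0 hr1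
  rw [norm_circlePt t θ] at hmain hreal
  refine hmain.trans ?_
  calc _ ≤ (1 + C) * Real.exp (π ^ 2 / 6 / t) * Real.exp (-(3 / 250 / t)) := by
        gcongr
        have : 3 / 250 / t = 3 / 250 * (1 / t) := by ring
        rw [this]
        linarith
    _ = _ := by rw [sub_eq_add_neg, Real.exp_add]; ring

lemma continuous_inv_eulerProd_circlePt {t : ℝ} (ht : 0 < t) :
    Continuous fun θ : ℝ => (eulerProd (circlePt t θ))⁻¹ := by
  refine Continuous.inv₀ ?_ fun θ => eulerProd_ne_zero (norm_circlePt_lt_one ht θ)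
  refine ModularForm.differentiableOn_tprod_one_sub_pow.continuousOn.comp_continuous
    (continuous_circlePt t) fun θ => ?_
  simpa using norm_circlePt_lt_one ht θ

/-- The main term of the circle integral, after rescaling to the saddle point integral. -/
lemma integral_main_eq {x t c : ℝ} (ht : 0 < t) (htc : π ^ 2 / 6 / t = c) (hxc : x * t = c) :
    (∫ θ in (-t)..t, Complex.sqrt ((t + θ * Complex.I) / (2 * π)) *
        Complex.exp (π ^ 2 / 6 / (t + θ * Complex.I) + x * (t + θ * Complex.I))) =
      (t * √(t / (2 * π)) : ℝ) * ∫ y in (-1 : ℝ)..1, Complex.sqrt (1 + y * Complex.I) *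
        Complex.exp (c * ((1 + y * Complex.I) + (1 + y * Complex.I)⁻¹)) := by
  have htC : (t : ℂ) ≠ 0 := by exact_mod_cast ht.ne'
  have hpi : (π : ℂ) ≠ 0 := by exact_mod_cast Real.pi_ne_zero
  have h := intervalIntegral.smul_integral_comp_mul_left (a := -1) (b := 1)
    (fun θ : ℝ => Complex.sqrt ((t + θ * Complex.I) / (2 * π)) *
      Complex.exp (π ^ 2 / 6 / (t + θ * Complex.I) + x * (t + θ * Complex.I))) t
  rw [mul_neg, mul_one] at h
  rw [← h, Complex.real_smul, Complex.ofReal_mul, mul_assoc,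
    ← intervalIntegral.integral_const_mul (√(t / (2 * π)) : ℂ)]
  congr 1
  refine intervalIntegral.integral_congr fun y _ => ?_
  have hz0 : (1 + y * Complex.I : ℂ) ≠ 0 := by
    intro h
    have := congrArg Complex.re h
    simp at this
  have h1 : ((t : ℂ) + (t * y : ℝ) * Complex.I) / (2 * π) =
      (t / (2 * π) : ℝ) * (1 + y * Complex.I) := by
    push_cast; field_simp
  have hxc' : (x * t : ℂ) = c := by exact_mod_cast hxc
  have htc' : (π ^ 2 / 6 / t : ℂ) = c := by exact_mod_cast htc
  have h2 : (π ^ 2 / 6 / ((t : ℂ) + (t * y : ℝ) * Complex.I) +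
      x * (t + (t * y : ℝ) * Complex.I)) =
      c * ((1 + y * Complex.I) + (1 + y * Complex.I)⁻¹) := by
    have h3 : ((t : ℂ) + (t * y : ℝ) * Complex.I) = t * (1 + y * Complex.I) := by
      push_cast; ring
    rw [h3, ← div_div, htc', ← mul_assoc, hxc']; ring
  rw [h1, h2, complex_sqrt_ofReal_mul (by positivity) hz0, mul_assoc]

lemma main_const_eq {n c t : ℝ} (hc : mu n = 2 * c) (hc0 : 0 < c) (ht : t = π ^ 2 / 6 / c) :
    t * √(t / (2 * π)) * (√(π / c) * Real.exp (2 * c) * (1 - 1 / (2 * c))) = 2 * π * T n := by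
  have hs : √(t / (2 * π)) * √(π / c) = π / (c * (2 * √3)) := by
    rw [← Real.sqrt_mul (by rw [ht]; positivity), Real.sqrt_eq_iff_mul_self_eq (by
      rw [ht]; positivity) (by positivity), ht]
    have : √3 * √3 = 3 := Real.mul_self_sqrt (by norm_num)
    field_simp
    linear_combination 2 * this
  rw [T, hc, d]
  have h3 : √3 ≠ 0 := by positivity
  calc _ = t * (√(t / (2 * π)) * √(π / c)) * (Real.exp (2 * c) * (1 - 1 / (2 * c))) := by ring
    _ = _ := by
      rw [hs, ht]
      generalize (1 - 1 / (2 * c)) = X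
      field_simp

/-- The leading Rademacher term approximates `p n` up to an exponentially smaller error. -/
lemma exists_abs_p_sub_T_le :
    ∃ C > 0, ∃ c₀ : ℝ, ∀ n : ℕ, 1 ≤ n → c₀ ≤ mu n / 2 →
      |p n - T n| ≤ C * Real.exp (399 / 200 * (mu n / 2)) := by
  obtain ⟨C₁, hC₁, t₁, ht₁, hmaj⟩ := exists_norm_inv_eulerProd_sub_le
  obtain ⟨C₂, hC₂, t₂, ht₂, hmin⟩ := exists_norm_inv_eulerProd_le_of_le_abs
  set m := min 1 (min t₁ t₂) with hm
  have hm0 : 0 < m := by positivity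
  refine ⟨2 * C₁ * Real.exp 1 + 2 * (C₂ * Real.exp 1 * π) + 36, by positivity,
    max 2 (π ^ 2 / 6 / m), fun n hn hcn => ?_⟩
  set c := mu n / 2 with hc
  have hc2 : 2 ≤ c := (le_max_left _ _).trans hcn
  have hc0 : 0 < c := by linarith
  set t := π ^ 2 / 6 / c with ht
  have ht0 : 0 < t := by positivity
  have htm : t ≤ m := by
    have := (le_max_right _ _).trans hcn
    rw [div_le_iff₀ hm0] at this
    rw [ht, div_le_iff₀ hc0]
    linarith
  have ht1 : t ≤ 1 := htm.trans (min_le_left _ _)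
  have htt₁ : t ≤ t₁ := htm.trans ((min_le_right _ _).trans (min_le_left _ _))
  have htt₂ : t ≤ t₂ := htm.trans ((min_le_right _ _).trans (min_le_right _ _))
  have htπ : t ≤ π := by linarith [Real.pi_gt_three]
  have htc : π ^ 2 / 6 / t = c := by rw [ht]; field_simp
  have hn' : (1 : ℝ) ≤ n := by exact_mod_cast hn
  have hcsq : c ^ 2 = π ^ 2 / 6 * (n - 1 / 24) := by
    rw [hc, mu, div_pow, mul_pow, Real.sq_sqrt (by linarith)]; ring
  have hxc : ((n : ℝ) - 1 / 24) * t = c := by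
    rw [ht]; field_simp; linear_combination (-144) * hcsq
  have hnt : n * t ≤ c + 1 := by linarith
  set F : ℝ → ℂ := fun θ =>
    (eulerProd (circlePt t θ))⁻¹ * Complex.exp (n * (t + θ * Complex.I)) with hF
  set M : ℝ → ℂ := fun θ => Complex.sqrt ((t + θ * Complex.I) / (2 * π)) *
    Complex.exp (π ^ 2 / 6 / (t + θ * Complex.I) + ((n - 1 / 24 : ℝ) : ℂ) * (t + θ * Complex.I))
    with hM
  have hnexp : ∀ θ : ℝ, ‖Complex.exp (n * (t + θ * Complex.I))‖ ≤ Real.exp (c + 1) := by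
    intro θ
    rw [Complex.norm_exp, Real.exp_le_exp]
    simpa using hnt
  have hFc : Continuous F := by
    have := continuous_inv_eulerProd_circlePt ht0
    fun_prop
  have hz0 : ∀ θ : ℝ, (t + θ * Complex.I : ℂ) ≠ 0 := by
    intro θ h
    have := congrArg Complex.re h
    simp at this
    exact ht0.ne' this
  have hMc : Continuous M := by
    have h1 : Continuous fun θ : ℝ => Complex.sqrt ((t + θ * Complex.I) / (2 * π)) := by
      refine continuous_iff_continuousAt.mpr fun θ => ?_
      refine ContinuousAt.comp (Complex.continuousAt_sqrt (Or.inl ?_)) (by fun_prop)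
      have : ((t + θ * Complex.I) / (2 * π) : ℂ) = (t + θ * Complex.I) / ((2 * π : ℝ) : ℂ) := by
        push_cast; rfl
      rw [this, Complex.div_ofReal_re]
      simp only [Complex.add_re, Complex.ofReal_re, Complex.mul_re, Complex.I_re, Complex.ofReal_im,
        Complex.I_im]
      have : 0 ≤ t / (2 * π) := by positivity
      simpa using this
    have h2 : Continuous fun θ : ℝ => (π ^ 2 / 6 / (t + θ * Complex.I) : ℂ) :=
      Continuous.div (by fun_prop) (by fun_prop) hz0
    fun_prop
  have hexp_min : Real.exp (c - 3 / 250 / t) * Real.exp (c + 1) ≤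
      Real.exp 1 * Real.exp (399 / 200 * c) := by
    rw [← Real.exp_add, ← Real.exp_add, Real.exp_le_exp]
    have : 3 / 250 / t = 3 / 250 * c / (π ^ 2 / 6) := by rw [ht]; field_simp
    have h2 : c / 200 ≤ 3 / 250 * c / (π ^ 2 / 6) := by
      rw [le_div_iff₀ (by positivity)]
      have : π ^ 2 / 6 ≤ 2 := by nlinarith [Real.pi_lt_d2, Real.pi_pos]
      nlinarith
    rw [this]; linarith
  have hexp_maj : Real.exp (c - 2 * π ^ 2 / t) * Real.exp (c + 1) ≤
      Real.exp 1 * Real.exp (399 / 200 * c) := by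
    rw [← Real.exp_add, ← Real.exp_add, Real.exp_le_exp]
    have : 2 * π ^ 2 / t = 12 * c := by rw [ht]; field_simp; norm_num
    rw [this]; linarith
  have hFmin : ∀ θ : ℝ, t ≤ |θ| → |θ| ≤ π →
      ‖F θ‖ ≤ C₂ * Real.exp 1 * Real.exp (399 / 200 * c) := by
    intro θ h1 h2
    have h3 := hmin t ht0 htt₂ θ h1 h2
    rw [htc] at h3
    rw [hF, norm_mul]
    calc _ ≤ C₂ * Real.exp (c - 3 / 250 / t) * Real.exp (c + 1) := by
          gcongr
          exact hnexp θ
      _ = C₂ * (Real.exp (c - 3 / 250 / t) * Real.exp (c + 1)) := by ring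
      _ ≤ C₂ * (Real.exp 1 * Real.exp (399 / 200 * c)) := by gcongr
      _ = _ := by ring
  have hFM : ∀ θ : ℝ, |θ| ≤ t → ‖F θ - M θ‖ ≤ C₁ * Real.exp 1 * Real.exp (399 / 200 * c) := by
    intro θ h1
    have h3 := (hmaj t ht0 htt₁ θ h1).2
    rw [htc] at h3
    have hfac : F θ - M θ = ((eulerProd (circlePt t θ))⁻¹ -
        Complex.sqrt ((t + θ * Complex.I) / (2 * π)) *
        Complex.exp (π ^ 2 / 6 / (t + θ * Complex.I) - (t + θ * Complex.I) / 24)) *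
        Complex.exp (n * (t + θ * Complex.I)) := by
      rw [sub_mul, mul_assoc (Complex.sqrt _), ← Complex.exp_add]
      simp only [hF, hM]
      congr 3
      push_cast; ring
    rw [hfac, norm_mul]
    calc _ ≤ C₁ * Real.exp (c - 2 * π ^ 2 / t) * Real.exp (c + 1) := by
          gcongr
          exact hnexp θ
      _ = C₁ * (Real.exp (c - 2 * π ^ 2 / t) * Real.exp (c + 1)) := by ring
      _ ≤ C₁ * (Real.exp 1 * Real.exp (399 / 200 * c)) := by gcongr
      _ = _ := by ring
  have hI := integral_inv_eulerProd n ht0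
  have hFi : ∀ a b : ℝ, IntervalIntegrable F MeasureTheory.volume a b := fun a b =>
    hFc.intervalIntegrable a b
  have hsplit : ∫ θ in (-π)..π, F θ =
      (∫ θ in (-π)..(-t), F θ) + (∫ θ in (-t)..t, F θ) + ∫ θ in t..π, F θ := by
    rw [intervalIntegral.integral_add_adjacent_intervals (hFi _ _) (hFi _ _),
      intervalIntegral.integral_add_adjacent_intervals (hFi _ _) (hFi _ _)]
  have hleft : ‖∫ θ in (-π)..(-t), F θ‖ ≤ C₂ * Real.exp 1 * Real.exp (399 / 200 * c) * π := by
    refine (intervalIntegral.norm_integral_le_of_norm_le_const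
      (C := C₂ * Real.exp 1 * Real.exp (399 / 200 * c)) fun θ hθ => ?_).trans ?_
    · rw [Set.uIoc_of_le (by linarith)] at hθ
      have : |θ| = -θ := abs_of_nonpos (by linarith [hθ.2])
      exact hFmin θ (by linarith [hθ.2]) (by linarith [hθ.1])
    · gcongr
      rw [abs_of_nonneg (by linarith)]; linarith
  have hright : ‖∫ θ in t..π, F θ‖ ≤ C₂ * Real.exp 1 * Real.exp (399 / 200 * c) * π := by
    refine (intervalIntegral.norm_integral_le_of_norm_le_const
      (C := C₂ * Real.exp 1 * Real.exp (399 / 200 * c)) fun θ hθ => ?_).trans ?_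
    · rw [Set.uIoc_of_le (by linarith)] at hθ
      have : |θ| = θ := abs_of_nonneg (by linarith [hθ.1])
      exact hFmin θ (by linarith [hθ.1]) (by linarith [hθ.2])
    · gcongr
      rw [abs_of_nonneg (by linarith)]; linarith
  have hmid : ‖(∫ θ in (-t)..t, F θ) - ∫ θ in (-t)..t, M θ‖ ≤
      C₁ * Real.exp 1 * Real.exp (399 / 200 * c) * 2 := by
    rw [← intervalIntegral.integral_sub (hFi _ _) (hMc.intervalIntegrable _ _)]
    refine (intervalIntegral.norm_integral_le_of_norm_le_const
      (C := C₁ * Real.exp 1 * Real.exp (399 / 200 * c)) fun θ hθ => ?_).trans ?_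
    · rw [Set.uIoc_of_le (by linarith)] at hθ
      exact hFM θ (abs_le.mpr ⟨hθ.1.le, hθ.2⟩)
    · gcongr
      rw [abs_of_nonneg (by linarith)]; linarith
  have hmainint : ‖(∫ θ in (-t)..t, M θ) - (2 * π * T n : ℝ)‖ ≤
      36 * Real.exp (399 / 200 * c) := by
    rw [hM, integral_main_eq ht0 htc hxc, ← main_const_eq (by rw [hc]; ring) hc0 ht,
      Complex.ofReal_mul (t * √(t / (2 * π))), ← mul_sub, norm_mul, Complex.norm_real,
      Real.norm_eq_abs, abs_of_nonneg (by positivity)]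
    have h1 : t * √(t / (2 * π)) ≤ 1 := by
      have : √(t / (2 * π)) ≤ 1 := by
        rw [Real.sqrt_le_left zero_le_one, one_pow, div_le_one (by positivity)]
        linarith [Real.pi_gt_three]
      exact mul_le_one₀ ht1 (Real.sqrt_nonneg _) this
    calc _ ≤ 1 * (36 * Real.exp (3 / 2 * c)) := by
          gcongr
          exact norm_saddle_integral_sub_le hc2
      _ ≤ _ := by rw [one_mul]; gcongr 36 * Real.exp ?_; linarith
  have hkey : ((2 * π * (p n - T n) : ℝ) : ℂ) =
      (∫ θ in (-π)..(-t), F θ) + ((∫ θ in (-t)..t, F θ) - ∫ θ in (-t)..t, M θ) +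
      ((∫ θ in (-t)..t, M θ) - (2 * π * T n : ℝ)) + ∫ θ in t..π, F θ := by
    have : ((2 * π * (p n - T n) : ℝ) : ℂ) = (2 * π * p n : ℂ) - (2 * π * T n : ℝ) := by
      push_cast; ring
    rw [this, ← hI, hsplit]; ring
  have hnorm : 2 * π * |p n - T n| = ‖((2 * π * (p n - T n) : ℝ) : ℂ)‖ := by
    rw [Complex.norm_real, Real.norm_eq_abs, abs_mul, abs_of_pos Real.two_pi_pos]
  have hfin : 2 * π * |p n - T n| ≤
      (2 * C₁ * Real.exp 1 + 2 * (C₂ * Real.exp 1 * π) + 36) * Real.exp (399 / 200 * c) := by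
    rw [hnorm, hkey]
    refine (norm_add_le _ _).trans ?_
    refine (add_le_add_left norm_add₃_le _).trans ?_
    linarith
  have : 1 * |p n - T n| ≤ 2 * π * |p n - T n| := by
    gcongr; linarith [Real.pi_gt_three]
  linarith

lemma tendsto_mu_nat : Tendsto (fun n : ℕ => mu n / 2) atTop atTop := by
  refine Tendsto.atTop_div_const two_pos ?_
  refine Tendsto.const_mul_atTop (by positivity) ?_
  refine Real.tendsto_sqrt_atTop.comp (tendsto_atTop_add_const_right _ _ ?_)
  exact Tendsto.const_mul_atTop (by norm_num) tendsto_natCast_atTop_atTop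

lemma abs_log_le_two_mul {y : ℝ} (hy : 1 / 2 ≤ y) : |Real.log y| ≤ 2 * |y - 1| := by
  have hy0 : 0 < y := by linarith
  have h1 := Real.log_le_sub_one_of_pos hy0
  have h2 := Real.one_sub_inv_le_log_of_pos hy0
  have h3 : 1 - y⁻¹ = (y - 1) * y⁻¹ := by field_simp
  have h4 : y⁻¹ ≤ 2 := by rw [inv_le_comm₀ hy0 two_pos]; linarith
  have h5 : |1 - y⁻¹| ≤ 2 * |y - 1| := by
    rw [h3, abs_mul, abs_of_pos (inv_pos.mpr hy0), mul_comm]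
    gcongr
  rw [abs_le]
  constructor
  · linarith [neg_abs_le (1 - y⁻¹)]
  · linarith [le_abs_self (y - 1), abs_nonneg (y - 1)]

/-- The relative error of the leading term is exponentially small. -/
lemma exists_eventually_abs_p_div_T_sub_one_le :
    ∃ C > 0, ∀ᶠ n : ℕ in atTop,
      |p n / T n - 1| ≤ C * ((mu n / 2) ^ 2 * Real.exp (-(mu n / 2 / 200))) := by
  obtain ⟨C, hC, c₀, h⟩ := exists_abs_p_sub_T_le
  have hd : 0 < d := by unfold d; positivity
  refine ⟨8 * C / d, by positivity, ?_⟩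
  filter_upwards [tendsto_mu_nat.eventually_ge_atTop (max 1 c₀), eventually_ge_atTop 1] with n hn hn1
  have h1 := h n hn1 ((le_max_right _ _).trans hn)
  set c := mu n / 2 with hc
  have hc1 : 1 ≤ c := (le_max_left _ _).trans hn
  have hmu : mu n = 2 * c := by rw [hc]; ring
  have hTge : d / (8 * c ^ 2) * Real.exp (2 * c) ≤ T n := by
    rw [T, hmu]
    gcongr
    have : 1 / (2 * c) ≤ 1 / 2 := by
      apply one_div_le_one_div_of_le <;> linarith
    calc d / (8 * c ^ 2) = d / (2 * c) ^ 2 * (1 / 2) := by field_simp; norm_num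
      _ ≤ d / (2 * c) ^ 2 * (1 - 1 / (2 * c)) := by gcongr; linarith
  have hlow : 0 < d / (8 * c ^ 2) * Real.exp (2 * c) := by positivity
  have hT : 0 < T n := hlow.trans_le hTge
  rw [div_sub_one hT.ne', abs_div, abs_of_pos hT]
  calc |p n - T n| / T n ≤
      C * Real.exp (399 / 200 * c) / (d / (8 * c ^ 2) * Real.exp (2 * c)) := by gcongr
    _ = 8 * C / d * (c ^ 2 * (Real.exp (399 / 200 * c) / Real.exp (2 * c))) := by
        field_simp
    _ = _ := by rw [← Real.exp_sub]; ring_nf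

lemma tendsto_rpow_mul_E :
    Tendsto (fun n : ℕ => (n : ℝ) ^ ((5 : ℝ) / 2) * E n) atTop (nhds 0) := by
  obtain ⟨C, hC, h⟩ := exists_eventually_abs_p_div_T_sub_one_le
  have hdecay : ∀ k : ℕ, Tendsto (fun n : ℕ => (mu n / 2) ^ k * Real.exp (-(mu n / 2 / 200)))
      atTop (nhds 0) := by
    intro k
    have h1 := (Real.tendsto_pow_mul_exp_neg_atTop_nhds_zero k).comp
      (tendsto_mu_nat.atTop_div_const (show (0 : ℝ) < 200 by norm_num))
    have h2 := h1.const_mul ((200 : ℝ) ^ k)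
    rw [mul_zero] at h2
    refine h2.congr fun n => ?_
    simp only [Function.comp_apply]
    rw [← mul_assoc, ← mul_pow]
    congr 2
    ring
  have hsmall : ∀ᶠ n : ℕ in atTop,
      C * ((mu n / 2) ^ 2 * Real.exp (-(mu n / 2 / 200))) ≤ 1 / 2 := by
    have := (hdecay 2).const_mul C
    rw [mul_zero] at this
    exact this.eventually_le_const (by norm_num)
  have hlim : Tendsto (fun n : ℕ => 2 * C * ((mu n / 2) ^ 5 * Real.exp (-(mu n / 2 / 200))))
      atTop (nhds 0) := by
    simpa using (hdecay 5).const_mul (2 * C)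
  refine squeeze_zero_norm' ?_ hlim
  filter_upwards [h, hsmall, eventually_ge_atTop 1] with n hn hs hn1
  have hn' : (1 : ℝ) ≤ n := by exact_mod_cast hn1
  have hn0 : (0 : ℝ) < n := by linarith
  have hlog : |Real.log (p n / T n)| ≤ 2 * |p n / T n - 1| :=
    abs_log_le_two_mul (by linarith [(abs_le.mp (hn.trans hs)).1])
  have hpow : (n : ℝ) ^ ((5 : ℝ) / 2) * (1 / n) = (n : ℝ) ^ ((3 : ℝ) / 2) := by
    rw [one_div, ← Real.rpow_neg_one, ← Real.rpow_add hn0]; norm_num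
  set c := mu n / 2 with hc
  have hc0 : 0 ≤ c := by rw [hc, mu]; positivity
  have hcsq : (n : ℝ) ≤ c ^ 2 := by
    have : c ^ 2 = π ^ 2 / 144 * (24 * n - 1) := by
      rw [hc, mu, div_pow, mul_pow, Real.sq_sqrt (by linarith)]; ring
    rw [this]
    have hpi : 9 ≤ π ^ 2 := by nlinarith [Real.pi_gt_three]
    nlinarith
  have hn32 : (n : ℝ) ^ ((3 : ℝ) / 2) ≤ c ^ 3 := by
    calc (n : ℝ) ^ ((3 : ℝ) / 2) ≤ (c ^ 2) ^ ((3 : ℝ) / 2) := by gcongr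
      _ = c ^ 3 := by
        rw [← Real.rpow_natCast, ← Real.rpow_mul hc0, ← Real.rpow_natCast]; norm_num
  rw [E, ← mul_assoc, hpow, Real.norm_eq_abs, abs_mul, abs_of_nonneg (by positivity)]
  calc (n : ℝ) ^ ((3 : ℝ) / 2) * |Real.log (p n / T n)|
      ≤ c ^ 3 * (2 * (C * (c ^ 2 * Real.exp (-(c / 200))))) := by
        gcongr
        exact hlog.trans (by gcongr)
    _ = _ := by ring

theorem limit_second_difference_E :
    Tendsto (fun n : ℕ =>
        ((n : ℝ) - 1) ^ ((5 : ℝ) / 2) * (E (n + 1) + E (n - 1) - 2 * E n))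
      atTop (nhds 0) := by
  have h := tendsto_rpow_mul_E.norm
  rw [norm_zero] at h
  have hsum := ((h.comp (tendsto_add_atTop_nat 1)).add (h.comp (tendsto_sub_atTop_nat 1))).add
    (h.const_mul 2)
  rw [mul_zero, add_zero, add_zero] at hsum
  refine squeeze_zero_norm' ?_ hsum
  filter_upwards [eventually_ge_atTop 1] with n hn
  have hn' : (1 : ℝ) ≤ n := by exact_mod_cast hn
  have hsub : ((n - 1 : ℕ) : ℝ) = n - 1 := by push_cast [hn]; ring
  have key : ∀ m : ℕ, (n : ℝ) - 1 ≤ m →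
      ((n : ℝ) - 1) ^ ((5 : ℝ) / 2) * |E m| ≤ ‖(m : ℝ) ^ ((5 : ℝ) / 2) * E m‖ := by
    intro m hm
    rw [norm_mul, Real.norm_eq_abs, Real.norm_eq_abs,
      abs_of_nonneg (Real.rpow_nonneg m.cast_nonneg _)]
    gcongr
  have k1 := key (n + 1) (by push_cast; linarith)
  have k2 := key (n - 1) hsub.ge
  have k3 := key n (by linarith)
  have hpow : 0 ≤ ((n : ℝ) - 1) ^ ((5 : ℝ) / 2) := Real.rpow_nonneg (by linarith) _
  rw [norm_mul, Real.norm_eq_abs, abs_of_nonneg hpow]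
  have habs : ‖E (n + 1) + E (n - 1) - 2 * E n‖ ≤ |E (n + 1)| + |E (n - 1)| + 2 * |E n| := by
    refine (norm_sub_le _ _).trans ?_
    rw [norm_mul, Real.norm_two, Real.norm_eq_abs, Real.norm_eq_abs]
    gcongr
    exact abs_add_le _ _
  have := mul_le_mul_of_nonneg_left habs hpow
  simp only [Function.comp_apply]
  linarith
end

section
/- For every integer n ≥ 60, 72π/((n-1)·(24n-25)^{3/2}) - 3π/(√24·n^{5/2} + 3π) < 1/(n-1)³. -/
open Real

/-- A Bernoulli-type lower bound for `(24 x - 25) ^ (3 / 2)`. -/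
lemma bernoulli_lower_bound {x : ℝ} (hx : 60 ≤ x) :
    24 * √24 * √x * (x - 25 / 16) ≤ (24 * x - 25) ^ ((3 : ℝ) / 2) := by
  have hy : 0 ≤ 24 * x - 25 := by linarith
  refine le_of_sq_le_sq ?_ (rpow_nonneg hy _)
  have hpow : ((24 * x - 25) ^ ((3 : ℝ) / 2)) ^ 2 = (24 * x - 25) ^ 3 := by
    rw [← rpow_mul_natCast hy, ← rpow_natCast]
    norm_num
  have hsq : (24 * √24 * √x * (x - 25 / 16)) ^ 2 = 24 ^ 3 * x * (x - 25 / 16) ^ 2 := by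
    rw [mul_pow, mul_pow, mul_pow, sq_sqrt (by norm_num), sq_sqrt (by linarith)]
    ring
  rw [hpow, hsq]
  nlinarith

lemma rpow_five_halves {x : ℝ} (hx : 0 < x) : x ^ ((5 : ℝ) / 2) = x ^ 2 * √x := by
  rw [sqrt_eq_rpow, ← rpow_natCast, ← rpow_add hx]
  norm_num

lemma three_pi_div_sqrt_lt : 3 * π / √24 < 1.93 := by
  have ht : (4.898 : ℝ) < √24 := lt_sqrt_of_sq_lt (by norm_num)
  rw [div_lt_iff₀ (by linarith)]
  linarith [pi_lt_d2]

/-- The inequality after the substitutions `s = √x` and `p = 3π / √24`. -/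
lemma sub_lt_inv_cube {x s p : ℝ} (hx : 60 ≤ x) (hs : 7.7 ≤ s) (hsx : s ^ 2 = x)
    (hp : 0 < p) (hp' : p < 1.93) :
    p / ((x - 1) * s * (x - 25 / 16)) - p / (x ^ 2 * s + p) < 1 / (x - 1) ^ 3 := by
  have hx1 : 0 < x - 1 := by linarith
  have hx2 : 0 < x - 25 / 16 := by linarith
  have hs0 : 0 < s := by linarith
  have hx0 : 0 < x := by linarith
  have hnum : p * ((41 / 16 * x - 25 / 16) * s + p) ≤ 0.65 * x ^ 2 := by
    have hsle : 7.7 * s ≤ x := by nlinarith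
    calc p * ((41 / 16 * x - 25 / 16) * s + p)
        ≤ p * (41 / 16 * x * s) := by gcongr; nlinarith
      _ ≤ 1.93 * (41 / 16 * x * (10 / 77 * x)) := by
        gcongr
        linarith
      _ ≤ 0.65 * x ^ 2 := by nlinarith [sq_nonneg x]
  rw [div_sub_div _ _ (by positivity) (by positivity),
    div_lt_div_iff₀ (by positivity) (by positivity)]
  calc (p * (x ^ 2 * s + p) - (x - 1) * s * (x - 25 / 16) * p) * (x - 1) ^ 3
      = p * ((41 / 16 * x - 25 / 16) * s + p) * (x - 1) ^ 3 := by ring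
    _ ≤ 0.65 * x ^ 2 * (x - 1) ^ 3 := by gcongr
    _ = (x - 1) * x ^ 2 * (0.65 * (x - 1) ^ 2) := by ring
    _ < (x - 1) * x ^ 2 * (x * (x - 25 / 16)) :=
      mul_lt_mul_of_pos_left (by nlinarith) (by positivity)
    _ = (x - 1) * s * (x - 25 / 16) * (x ^ 2 * s) := by rw [← hsx]; ring
    _ ≤ 1 * ((x - 1) * s * (x - 25 / 16) * (x ^ 2 * s + p)) := by
      rw [one_mul]
      gcongr
      linarith

theorem elementary_ineq (n : ℕ) (hn : 60 ≤ n) :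
    72 * π / (((n : ℝ) - 1) * (24 * (n : ℝ) - 25) ^ ((3 : ℝ) / 2)) -
        3 * π / (Real.sqrt 24 * (n : ℝ) ^ ((5 : ℝ) / 2) + 3 * π) <
      1 / ((n : ℝ) - 1) ^ 3 := by
  have hx : (60 : ℝ) ≤ n := by exact_mod_cast hn
  generalize (n : ℝ) = x at hx ⊢
  have hx0 : 0 < x := by linarith
  have hx1 : 0 < x - 1 := by linarith
  have hx2 : 0 < x - 25 / 16 := by linarith
  have ht : 0 < √(24 : ℝ) := by positivity
  have hs : 0 < √x := by positivity
  have hpi := pi_pos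
  have hfirst : 72 * π / ((x - 1) * (24 * x - 25) ^ ((3 : ℝ) / 2)) ≤
      3 * π / √24 / ((x - 1) * √x * (x - 25 / 16)) := by
    calc 72 * π / ((x - 1) * (24 * x - 25) ^ ((3 : ℝ) / 2))
        ≤ 72 * π / ((x - 1) * (24 * √24 * √x * (x - 25 / 16))) := by
          gcongr
          exact bernoulli_lower_bound hx
      _ = 3 * π / √24 / ((x - 1) * √x * (x - 25 / 16)) := by
          field_simp
          norm_num
  have hsecond : 3 * π / (√24 * x ^ ((5 : ℝ) / 2) + 3 * π) =
      3 * π / √24 / (x ^ 2 * √x + 3 * π / √24) := by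
    rw [rpow_five_halves hx0, div_div, mul_add, mul_div_cancel₀ _ ht.ne']
  rw [hsecond]
  exact (sub_le_sub_right hfirst _).trans_lt <|
    sub_lt_inv_cube hx (le_sqrt_of_sq_le (by norm_num; linarith)) (sq_sqrt hx0.le)
      (by positivity) three_pi_div_sqrt_lt
end
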